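/- arXiv:2306.07161 — 6 statements merged into one kernel-verified Lean document; each statement's English description precedes it below -/
import Mathlib

section
/- Fix positive integers n, d and x. Then: (i) if either n = 1 or d = 2, then T(n,d;x) = ∅ for every x; (ii) T(2,3;x) = ∅ for every x; (iii) if n ≥ 2, d ≥ 3 and (n,d) ≠ (2,3), then T(n,d;x) ≠ ∅ if and only if x ≥ n + ⌈d/2⌉. -/
open MvPolynomial

noncomputable section

/-- Projective `n`-space over `k`, as the projectivization of `k^(n+1)`. -/
abbrev ProjSpace (k : Type*) [Field k] (n : ℕ) := Projectivization k (Fin (n+1) → k)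

variable (k : Type*) [Field k]

/-- Evaluation at a vector, as a linear map on polynomials. -/
def evalLM {n : ℕ} (v : Fin n → k) : MvPolynomial (Fin n) k →ₗ[k] k :=
  (MvPolynomial.aeval v).toLinearMap

/-- The submodule of polynomials vanishing together with all first partial derivatives at `v`. -/
def doubleVanishing {n : ℕ} (v : Fin n → k) : Submodule k (MvPolynomial (Fin n) k) :=
  LinearMap.ker (evalLM k v) ⊓
    ⨅ i : Fin n, LinearMap.ker ((evalLM k v).comp (MvPolynomial.pderiv i).toLinearMap)

/-- `h^0(I_{2S}(d))`: dimension of degree-`d` forms vanishing doubly at all points of `S`. -/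
def h0 (n d : ℕ) (S : Finset (ProjSpace k n)) : ℕ :=
  Module.finrank k
    ↥(homogeneousSubmodule (Fin (n+1)) k d ⊓ ⨅ p ∈ S, doubleVanishing k p.rep)

/-- `h^1(I_{2S}(d)) = h^0(I_{2S}(d)) + (n+1)#S - C(n+d,n)`. -/
def h1 (n d : ℕ) (S : Finset (ProjSpace k n)) : ℤ :=
  (h0 k n d S : ℤ) + (n+1) * S.card - (n+d).choose n

/-- `S` spans `P^n`: it is contained in no hyperplane. -/
def Spans (n : ℕ) (S : Finset (ProjSpace k n)) : Prop :=
  Submodule.span k (Projectivization.rep '' (S : Set (ProjSpace k n))) = ⊤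

/-- The Terracini locus `T(n,d;x)`. -/
def Terracini (n d x : ℕ) : Set (Finset (ProjSpace k n)) :=
  {S | S.card = x ∧ Spans k n S ∧ 0 < h0 k n d S ∧ 0 < h1 k n d S}

/-- The minimally Terracini locus `T(n,d;x)'`. -/
def minTerracini (n d x : ℕ) : Set (Finset (ProjSpace k n)) :=
  {S | S ∈ Terracini k n d x ∧ ∀ A : Finset (ProjSpace k n), A ⊂ S → h1 k n d A = 0}

end

namespace TerrAux

theorem finrank_homog (k : Type*) [Field k] (n d : ℕ) :
    Module.finrank k (homogeneousSubmodule (Fin (n+1)) k d) = (n+d).choose n := by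
  classical
  have hset : {m : Fin (n+1) →₀ ℕ | m.degree = d}
      = ((Finset.univ : Finset (Fin (n+1))).finsuppAntidiag d : Set _) := by
    ext m
    simp [Finsupp.degree_eq_sum]
  rw [homogeneousSubmodule_eq_finsupp_supported,
    (AddMonoidAlgebra.supportedEquivFinsupp {m : Fin (n+1) →₀ ℕ | m.degree = d}).finrank_eq, hset,
    Module.finrank_finsupp_self]
  erw [Fintype.card_coe]
  rw [Finset.card_finsuppAntidiag_nat_eq_choose]
  simp only [Finset.card_univ, Fintype.card_fin]
  rw [show n + 1 + d - 1 = n + d by omega, Nat.choose_symm_add]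

theorem mem_dv {k : Type*} [Field k] {n : ℕ} {v : Fin n → k} {f : MvPolynomial (Fin n) k} :
    f ∈ doubleVanishing k v ↔ eval v f = 0 ∧ ∀ i, eval v (pderiv i f) = 0 := by
  simp [doubleVanishing, evalLM, aeval_eq_eval]

theorem euler_eval {k : Type*} [Field k] {n d : ℕ} {f : MvPolynomial (Fin n) k}
    (hf : f.IsHomogeneous d) (v : Fin n → k) :
    ∑ i, v i * eval v (pderiv i f) = d * eval v f := by
  have := congrArg (eval v) hf.sum_X_mul_pderiv
  simpa using this

theorem mem_dv_of_grad {k : Type*} [Field k] [CharZero k] {n d : ℕ} (hd : 0 < d)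
    {v : Fin n → k} {f : MvPolynomial (Fin n) k}
    (hf : f.IsHomogeneous d) (h : ∀ i, eval v (pderiv i f) = 0) : f ∈ doubleVanishing k v := by
  refine mem_dv.2 ⟨?_, h⟩
  have := euler_eval hf v
  simp only [h, mul_zero, Finset.sum_const_zero] at this
  have hd' : (d : k) ≠ 0 := by exact_mod_cast hd.ne'
  rcases mul_eq_zero.1 this.symm with h | h
  · exact absurd h hd'
  · exact h

theorem eval_smul_homog {k : Type*} [Field k] {n d : ℕ} {f : MvPolynomial (Fin n) k}
    (hf : f.IsHomogeneous d) (c : k) (v : Fin n → k) : eval (c • v) f = c ^ d * eval v f := by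
  rw [eval_eq', eval_eq', Finset.mul_sum]
  refine Finset.sum_congr rfl fun m hm => ?_
  have h1 := hf.degree_eq_sum_deg_support hm
  simp only [Pi.smul_apply, smul_eq_mul, mul_pow, Finset.prod_mul_distrib,
    Finset.prod_pow_eq_pow_sum]
  have h2 : ∑ i, m i = d := by
    rw [h1]; exact (Finset.sum_subset (Finset.subset_univ _) (by simp)).symm
  rw [h2]; ring

theorem dv_smul {k : Type*} [Field k] {n d : ℕ} {f : MvPolynomial (Fin n) k}
    (hf : f.IsHomogeneous d) {c : k} (hc : c ≠ 0) {v : Fin n → k} :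
    f ∈ doubleVanishing k (c • v) ↔ f ∈ doubleVanishing k v := by
  simp only [mem_dv, eval_smul_homog hf, eval_smul_homog (hf.pderiv), mul_eq_zero, pow_eq_zero_iff',
    hc, false_and, false_or]

/-- The gradient map. -/
noncomputable def grad (k : Type*) [Field k] (n d : ℕ) (S : Finset (ProjSpace k n)) :
    homogeneousSubmodule (Fin (n+1)) k d →ₗ[k] (S → Fin (n+1) → k) :=
  LinearMap.pi fun p => LinearMap.pi fun i =>
    ((evalLM k p.1.rep).comp (MvPolynomial.pderiv i).toLinearMap).comp (Submodule.subtype _)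

theorem grad_apply {k : Type*} [Field k] {n d : ℕ} {S : Finset (ProjSpace k n)}
    (f : homogeneousSubmodule (Fin (n+1)) k d) (p : S) (i : Fin (n+1)) :
    grad k n d S f p i = eval p.1.rep (pderiv i f.1) := by
  simp [grad, evalLM, aeval_eq_eval]

instance finite_homog (k : Type*) [Field k] (n d : ℕ) :
    FiniteDimensional k (homogeneousSubmodule (Fin (n+1)) k d) :=
  Module.Finite.iff_fg.2 (homogeneousSubmodule_fg _ _ _)

theorem h0_eq {k : Type*} [Field k] [CharZero k] {n d : ℕ} (hd : 0 < d)
    (S : Finset (ProjSpace k n)) :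
    h0 k n d S = Module.finrank k (LinearMap.ker (grad k n d S)) := by
  unfold h0
  have : homogeneousSubmodule (Fin (n+1)) k d ⊓ ⨅ p ∈ S, doubleVanishing k p.rep
      = (LinearMap.ker (grad k n d S)).map (Submodule.subtype _) := by
    ext f
    simp only [Submodule.mem_inf, Submodule.mem_iInf, Submodule.mem_map, LinearMap.mem_ker]
    constructor
    · rintro ⟨hf, h⟩
      refine ⟨⟨f, hf⟩, ?_, rfl⟩
      ext p i
      rw [grad_apply]
      exact (mem_dv.1 (h p.1 p.2)).2 i
    · rintro ⟨f, h, rfl⟩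
      refine ⟨f.2, fun p hp => mem_dv_of_grad hd f.2 fun i => ?_⟩
      have := congrFun (congrFun h ⟨p, hp⟩) i
      rwa [grad_apply] at this
  rw [this]
  exact Submodule.finrank_map_subtype_eq _ _

theorem h1_eq {k : Type*} [Field k] [CharZero k] {n d : ℕ} (hd : 0 < d)
    (S : Finset (ProjSpace k n)) :
    h1 k n d S + Module.finrank k (LinearMap.range (grad k n d S)) = (n+1) * S.card := by
  have := LinearMap.finrank_range_add_finrank_ker (grad k n d S)
  rw [finrank_homog, ← h0_eq hd] at this
  unfold h1
  rw [← this]; push_cast; ring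

theorem finrank_target {k : Type*} [Field k] {n : ℕ} (S : Finset (ProjSpace k n)) :
    Module.finrank k (S → Fin (n+1) → k) = (n+1) * S.card := by
  rw [Module.finrank_pi_fintype]
  simp [mul_comm]

/-- If there are separating degree d-1 forms then `h1 = 0`. -/
theorem h1_eq_zero {k : Type*} [Field k] [CharZero k] {n d : ℕ} (hd : 0 < d)
    (S : Finset (ProjSpace k n))
    (H : ∀ p ∈ S, ∀ w : Fin (n+1) → k, ∃ f : MvPolynomial (Fin (n+1)) k, f.IsHomogeneous d ∧
      (∀ q ∈ S, q ≠ p → f ∈ doubleVanishing k q.rep) ∧ ∀ i, eval p.rep (pderiv i f) = w i) :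
    h1 k n d S = 0 := by
  classical
  have hs : LinearMap.range (grad k n d S) = ⊤ := by
    rw [LinearMap.range_eq_top]
    intro W
    choose F hF1 hF2 hF3 using fun p : S => H p.1 p.2 (W p)
    refine ⟨∑ p, ⟨F p, hF1 p⟩, ?_⟩
    ext q i
    rw [map_sum, Finset.sum_apply, Finset.sum_apply, Finset.sum_eq_single q]
    · rw [grad_apply]; exact hF3 q i
    · intro p _ hp
      rw [grad_apply]
      exact (mem_dv.1 (hF2 p q.1 q.2 fun h => hp (Subtype.ext h.symm))).2 i
    · simp
  have := h1_eq hd S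
  rw [hs, finrank_top, finrank_target] at this
  push_cast at this
  linarith

theorem h1_pos {k : Type*} [Field k] [CharZero k] {n d : ℕ} (hd : 0 < d)
    (S : Finset (ProjSpace k n)) (p : ProjSpace k n) (hp : p ∈ S) (w : Fin (n+1) → k)
    (H : ∀ f : MvPolynomial (Fin (n+1)) k, f.IsHomogeneous d →
      (∀ q ∈ S, q ≠ p → f ∈ doubleVanishing k q.rep) →
      (∀ i, eval p.rep (pderiv i f) = w i) → False) :
    0 < h1 k n d S := by
  classical
  have hs : LinearMap.range (grad k n d S) ≠ ⊤ := by
    intro h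
    rw [LinearMap.range_eq_top] at h
    obtain ⟨f, hf⟩ := h (fun q => if q.1 = p then w else 0)
    have hf' : ∀ (q : S) i, eval q.1.rep (pderiv i f.1) = (if q.1 = p then w else 0) i := by
      intro q i
      rw [← grad_apply, hf]
    refine H f.1 f.2 (fun q hq hqp => mem_dv_of_grad hd f.2 fun i => ?_) fun i => ?_
    · have := hf' ⟨q, hq⟩ i
      simpa [hqp] using this
    · have := hf' ⟨p, hp⟩ i
      simpa using this
  have h1 := Submodule.finrank_lt hs
  have := h1_eq hd S
  rw [finrank_target] at h1
  have h2 : (Module.finrank k (LinearMap.range (grad k n d S)) : ℤ) < (n+1) * S.card := by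
    exact_mod_cast h1
  linarith

theorem h0_pos {k : Type*} [Field k] {n d : ℕ} {S : Finset (ProjSpace k n)} :
    0 < h0 k n d S ↔ ∃ f : MvPolynomial (Fin (n+1)) k, f ≠ 0 ∧ f.IsHomogeneous d ∧
      ∀ p ∈ S, f ∈ doubleVanishing k p.rep := by
  unfold h0
  have : FiniteDimensional k
    ↥(homogeneousSubmodule (Fin (n+1)) k d ⊓ ⨅ p ∈ S, doubleVanishing k p.rep) :=
    Submodule.finiteDimensional_of_le inf_le_left
  rw [Module.finrank_pos_iff_exists_ne_zero]
  constructor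
  · rintro ⟨⟨f, hf⟩, h⟩
    simp only [Submodule.mem_inf, Submodule.mem_iInf] at hf
    exact ⟨f, fun h' => h (Subtype.ext h'), hf.1, hf.2⟩
  · rintro ⟨f, h, hf⟩
    refine ⟨⟨f, ?_⟩, fun h' => h (congrArg Subtype.val h')⟩
    simp only [Submodule.mem_inf, Submodule.mem_iInf]
    exact hf

/-- linear forms -/
noncomputable def lin {k : Type*} [Field k] {n : ℕ} (c : Fin n → k) : MvPolynomial (Fin n) k :=
  ∑ i, C (c i) * X i

theorem lin_homog {k : Type*} [Field k] {n : ℕ} (c : Fin n → k) : (lin c).IsHomogeneous 1 :=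
  IsHomogeneous.sum _ _ _ fun _ _ => isHomogeneous_C_mul_X _ _

theorem lin_eval {k : Type*} [Field k] {n : ℕ} (c v : Fin n → k) :
    eval v (lin c) = ∑ i, c i * v i := by simp [lin]

theorem lin_pderiv {k : Type*} [Field k] {n : ℕ} (c : Fin n → k) (i : Fin n) :
    pderiv i (lin c) = C (c i) := by
  classical
  simp [lin, pderiv_X, Pi.single_apply]

theorem exists_lin {k : Type*} [Field k] {n : ℕ} (φ : (Fin n → k) →ₗ[k] k) :
    ∃ c : Fin n → k, ∀ v, eval v (lin c) = φ v := by
  refine ⟨fun i => φ (Pi.single i 1), fun v => ?_⟩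
  rw [lin_eval]
  rw [LinearMap.pi_apply_eq_sum_univ φ v]
  refine Finset.sum_congr rfl fun i _ => ?_
  rw [smul_eq_mul, mul_comm]
  congr 2
  ext j; simp [Pi.single_apply, eq_comm]

theorem dv_mul_right {k : Type*} [Field k] {n : ℕ} {v : Fin n → k} {f : MvPolynomial (Fin n) k}
    (hf : f ∈ doubleVanishing k v) (g : MvPolynomial (Fin n) k) :
    f * g ∈ doubleVanishing k v := by
  rw [mem_dv] at *
  simp [hf.1, hf.2]

theorem dv_mul_left {k : Type*} [Field k] {n : ℕ} {v : Fin n → k} {f : MvPolynomial (Fin n) k}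
    (hf : f ∈ doubleVanishing k v) (g : MvPolynomial (Fin n) k) :
    g * f ∈ doubleVanishing k v := by
  rw [mul_comm]; exact dv_mul_right hf g

theorem dv_mul {k : Type*} [Field k] {n : ℕ} {v : Fin n → k} {f g : MvPolynomial (Fin n) k}
    (hf : eval v f = 0) (hg : eval v g = 0) : f * g ∈ doubleVanishing k v := by
  rw [mem_dv]
  simp [hf, hg]

theorem dv_pow {k : Type*} [Field k] {n m : ℕ} (hm : 2 ≤ m) {v : Fin n → k}
    {f : MvPolynomial (Fin n) k} (hf : eval v f = 0) : f ^ m ∈ doubleVanishing k v := by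
  obtain ⟨m, rfl⟩ := Nat.exists_eq_add_of_le hm
  rw [pow_add, pow_two]
  exact dv_mul_right (dv_mul hf hf) _

/-- Key vanishing criterion. -/
theorem h1_eq_zero_of_sep {k : Type*} [Field k] [CharZero k] {n d : ℕ} (hd : 0 < d)
    (S : Finset (ProjSpace k n))
    (H : ∀ p ∈ S, ∃ K : MvPolynomial (Fin (n+1)) k, K.IsHomogeneous (d-1) ∧
      (∀ q ∈ S, q ≠ p → K ∈ doubleVanishing k q.rep) ∧ eval p.rep K ≠ 0) :
    h1 k n d S = 0 := by
  refine h1_eq_zero hd S fun p hp w => ?_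
  obtain ⟨K, hK, hK2, hK3⟩ := H p hp
  set κ := eval p.rep K with hκ
  have hd' : (d : k) ≠ 0 := by exact_mod_cast hd.ne'
  have hE := euler_eval hK p.rep
  rw [← hκ] at hE
  have hdc : ((d - 1 : ℕ) : k) = d - 1 := by push_cast [Nat.cast_sub (Nat.succ_le_of_lt hd)]; simp
  rw [hdc] at hE
  set s := (∑ i, w i * p.rep i) / (d * κ) with hs
  let c : Fin (n+1) → k := fun i => (w i - s * eval p.rep (pderiv i K)) / κ
  have hc : ∑ i, c i * p.rep i = s := by
    have : ∑ i, c i * p.rep i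
        = ((∑ i, w i * p.rep i) - s * ∑ i, p.rep i * eval p.rep (pderiv i K)) / κ := by
      rw [Finset.mul_sum, ← Finset.sum_sub_distrib, Finset.sum_div]
      refine Finset.sum_congr rfl fun i _ => ?_
      simp only [c]; ring
    rw [this, hE]
    have h2 : ∑ i, w i * p.rep i = s * (d * κ) := by rw [hs]; field_simp
    rw [h2]; field_simp; ring
  refine ⟨K * lin c, ?_, fun q hq hqp => dv_mul_right (hK2 q hq hqp) _, fun i => ?_⟩
  · have := hK.mul (lin_homog c)
    rwa [Nat.sub_add_cancel hd] at this
  · rw [pderiv_mul, lin_pderiv]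
    simp only [map_add, map_mul, eval_C, lin_eval, hc, ← hκ]
    simp only [c]; field_simp; ring

/-- a linear form through q not p -/
theorem exists_lin_sep {k : Type*} [Field k] {n : ℕ} {p q : ProjSpace k n} (h : q ≠ p) :
    ∃ c : Fin (n+1) → k, eval q.rep (lin c) = 0 ∧ eval p.rep (lin c) ≠ 0 := by
  have h1 : p.rep ∉ Submodule.span k {q.rep} := by
    intro h2
    obtain ⟨a, ha⟩ := Submodule.mem_span_singleton.1 h2
    have h3 := Projectivization.linearIndependent_pair_iff_ne.2 h
    rw [LinearIndependent.pair_iff' q.rep_nonzero] at h3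
    exact h3 a ha
  obtain ⟨φ, h2, h3⟩ := Submodule.exists_le_ker_of_notMem h1
  obtain ⟨c, hc⟩ := exists_lin φ
  refine ⟨c, ?_, by rwa [hc]⟩
  rw [hc]
  exact h3 (Submodule.mem_span_singleton_self _)

theorem exists_lin_ne {k : Type*} [Field k] {n : ℕ} (p : ProjSpace k n) :
    ∃ c : Fin (n+1) → k, eval p.rep (lin c) ≠ 0 := by
  have h1 : p.rep ∉ (⊥ : Submodule k (Fin (n+1) → k)) := by simpa using p.rep_nonzero
  obtain ⟨φ, h2, h3⟩ := Submodule.exists_le_ker_of_notMem h1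
  obtain ⟨c, hc⟩ := exists_lin φ
  exact ⟨c, by rwa [hc]⟩

/-- product of squares -/
theorem exists_prod {k : Type*} [Field k] {n : ℕ} (p : ProjSpace k n)
    (R : Finset (ProjSpace k n)) (hR : p ∉ R) :
    ∃ K : MvPolynomial (Fin (n+1)) k, K.IsHomogeneous (2 * R.card) ∧
      (∀ q ∈ R, K ∈ doubleVanishing k q.rep) ∧ eval p.rep K ≠ 0 := by
  classical
  induction R using Finset.induction_on with
  | empty => exact ⟨1, by simpa using isHomogeneous_one _ _, by simp, by simp⟩
  | insert q R hq ih =>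
    simp only [Finset.mem_insert, not_or] at hR
    obtain ⟨K, h1, h2, h3⟩ := ih hR.2
    obtain ⟨c, hc1, hc2⟩ := exists_lin_sep (Ne.symm hR.1)
    refine ⟨K * lin c ^ 2, ?_, ?_, ?_⟩
    · have := h1.mul ((lin_homog c).pow 2)
      rw [Finset.card_insert_of_notMem hq]
      convert this using 1; ring
    · intro r hr
      rcases Finset.mem_insert.1 hr with rfl | hr
      · exact dv_mul_left (dv_pow le_rfl hc1) _
      · exact dv_mul_right (h2 r hr) _
    · simp [h3, hc2]

/-- n = 1 style vanishing -/
theorem h1_zero_of_small {k : Type*} [Field k] [CharZero k] {n d : ℕ} (hd : 0 < d)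
    (S : Finset (ProjSpace k n)) (hS : 2 * S.card ≤ d + 1) : h1 k n d S = 0 := by
  classical
  refine h1_eq_zero_of_sep hd S fun p hp => ?_
  obtain ⟨K, h1, h2, h3⟩ := exists_prod p (S.erase p) (by simp)
  obtain ⟨c, hc⟩ := exists_lin_ne p
  have h4 := Finset.card_erase_of_mem hp
  have h5 := Finset.card_pos.2 ⟨p, hp⟩
  refine ⟨K * lin c ^ (d - 1 - 2 * (S.erase p).card), ?_,
    fun q hq hqp => dv_mul_right (h2 q (Finset.mem_erase.2 ⟨hqp, hq⟩)) _, by simp [h3, hc]⟩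
  have := h1.mul ((lin_homog c).pow (d - 1 - 2 * (S.erase p).card))
  convert this using 1
  omega

theorem case_n1 {k : Type*} [Field k] [CharZero k] {d : ℕ} (hd : 0 < d)
    (S : Finset (ProjSpace k 1)) (hpos : 0 < S.card) (h : 0 < h0 k 1 d S) : h1 k 1 d S = 0 := by
  by_cases hS : 2 * S.card ≤ d + 1
  · exact h1_zero_of_small hd S hS
  exfalso
  obtain ⟨f, hf0, hf, hfS⟩ := h0_pos.1 h
  obtain ⟨p, hp⟩ := Finset.card_pos.1 hpos
  obtain ⟨c, hc⟩ := exists_lin_ne p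
  have hc0 : lin c ≠ 0 := by rintro h; simp [h] at hc
  have hD : 0 < h0 k 1 (2 * S.card - 1) S := by
    refine h0_pos.2 ⟨f * lin c ^ (2 * S.card - 1 - d), mul_ne_zero hf0 (pow_ne_zero _ hc0), ?_,
      fun p hp => dv_mul_right (hfS p hp) _⟩
    have := hf.mul ((lin_homog c).pow (2 * S.card - 1 - d))
    convert this using 1
    omega
  have h1z := h1_zero_of_small (d := 2 * S.card - 1) (by omega) S (by omega)
  unfold h1 at h1z
  rw [Nat.choose_one_right] at h1z
  push_cast at h1z
  omega

theorem case_d2 {k : Type*} [Field k] [CharZero k] {n : ℕ}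
    (S : Finset (ProjSpace k n)) (hS : Spans k n S) (h : 0 < h0 k n 2 S) : False := by
  obtain ⟨f, hf0, hf, hfS⟩ := h0_pos.1 h
  apply hf0
  have key : ∀ i, pderiv i f = 0 := by
    intro i
    have h1 : (pderiv i f).IsHomogeneous 1 := hf.pderiv
    obtain ⟨φ, hφ⟩ : ∃ φ : (Fin (n+1) → k) →ₗ[k] k, ∀ v, eval v (pderiv i f) = φ v := by
      have : pderiv i f ∈ Submodule.span k (Set.range (X : Fin (n+1) → MvPolynomial _ k)) := by
        rw [← homogeneousSubmodule_one_eq_span_X]; exact h1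
      generalize pderiv i f = g at this
      induction this using Submodule.span_induction with
      | mem x hx => obtain ⟨j, rfl⟩ := hx; exact ⟨LinearMap.proj j, fun v => by simp⟩
      | zero => exact ⟨0, by simp⟩
      | add x y _ _ hx hy =>
        obtain ⟨a, ha⟩ := hx; obtain ⟨b, hb⟩ := hy
        exact ⟨a + b, fun v => by simp [ha, hb]⟩
      | smul r x _ hx =>
        obtain ⟨a, ha⟩ := hx
        exact ⟨r • a, fun v => by simp [ha]⟩
    have hz : φ = 0 := by
      rw [← LinearMap.ker_eq_top, eq_top_iff, ← hS, Submodule.span_le]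
      rintro _ ⟨p, hp, rfl⟩
      have := (mem_dv.1 (hfS p hp)).2 i
      rw [hφ] at this
      exact this
    refine MvPolynomial.funext fun v => ?_
    rw [hφ, hz]; simp
  have := hf.sum_X_mul_pderiv
  simp only [key, mul_zero, Finset.sum_const_zero] at this
  rw [nsmul_eq_mul] at this
  rcases mul_eq_zero.1 this.symm with h | h
  · exfalso; revert h; norm_num
  · exact h

theorem exists_dual {k : Type*} [Field k] {n : ℕ} {S : Finset (ProjSpace k n)}
    (hS : Spans k n S) {p : ProjSpace k n} (hp : p ∈ S) :
    ∃ B : Finset (ProjSpace k n), B ⊆ S ∧ p ∈ B ∧ B.card = n + 1 ∧ Spans k n B ∧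
      ∃ c : ProjSpace k n → (Fin (n+1) → k),
        (∀ q ∈ B, eval q.rep (lin (c q)) = 1) ∧
        (∀ q ∈ B, ∀ r ∈ B, r ≠ q → eval r.rep (lin (c q)) = 0) ∧
        ∀ v, v = ∑ q ∈ B, eval v (lin (c q)) • q.rep := by
  classical
  have h1 : LinearIndepOn k (Projectivization.rep (K := k) (V := Fin (n+1) → k)) {p} := by
    rw [linearIndepOn_singleton_iff]; exact p.rep_nonzero
  obtain ⟨b, hbS, hpb, hspan, hli⟩ := exists_linearIndepOn_extension (t := (S : Set _)) h1
    (by simpa using hp)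
  have hbfin : b.Finite := S.finite_toSet.subset hbS
  obtain ⟨B, rfl⟩ := hbfin.exists_finset_coe
  have htop : Submodule.span k (Projectivization.rep '' (B : Set (ProjSpace k n))) = ⊤ := by
    rw [eq_top_iff, ← hS, Submodule.span_le]; exact hspan
  have hli' : LinearIndependent k (fun q : B => q.1.rep) := hli
  have htop' : ⊤ ≤ Submodule.span k (Set.range (fun q : B => q.1.rep)) := by
    rw [← htop]
    apply Submodule.span_mono
    rintro _ ⟨q, hq, rfl⟩
    exact ⟨⟨q, hq⟩, rfl⟩
  let bs := Module.Basis.mk hli' htop'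
  have hcard : B.card = n + 1 := by
    have := Module.finrank_eq_card_basis bs
    simpa using this.symm
  choose c hc using fun q : B => exists_lin (bs.coord q)
  have hbs : ∀ q : B, bs q = q.1.rep := fun q => by simp [bs]
  refine ⟨B, by simpa using hbS, by simpa using hpb, hcard, htop,
    fun q => if h : q ∈ B then c ⟨q, h⟩ else 0, ?_, ?_, ?_⟩
  · intro q hq
    simp only [hq, dite_true]
    rw [hc, ← hbs ⟨q, hq⟩]; simp
  · intro q hq r hr hrq
    simp only [hq, dite_true]
    rw [hc, ← hbs ⟨r, hr⟩]
    simp [hrq]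
  · intro v
    conv_lhs => rw [← bs.sum_repr v]
    rw [← Finset.sum_coe_sort B]
    refine Finset.sum_congr rfl fun q _ => ?_
    simp only [q.2, dite_true]
    rw [hbs, hc]; rfl

theorem main_vanish {k : Type*} [Field k] [CharZero k] {n d : ℕ} (hd : 0 < d)
    (S : Finset (ProjSpace k n)) (hS : Spans k n S) (hx : S.card < n + (d+1)/2) :
    h1 k n d S = 0 := by
  classical
  refine h1_eq_zero_of_sep hd S fun p hp => ?_
  obtain ⟨B, hBS, hpB, hcard, -, c, hc1, hc2, -⟩ := exists_dual hS hp
  obtain ⟨K, h1, h2, h3⟩ := exists_prod p (S \ B) (by simp [hpB])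
  have h4 := Finset.card_sdiff_add_card_eq_card hBS
  refine ⟨K * lin (c p) ^ (d - 1 - 2 * (S \ B).card), ?_, fun q hq hqp => ?_,
    by simp [h3, hc1 p hpB]⟩
  · have := h1.mul ((lin_homog (c p)).pow (d - 1 - 2 * (S \ B).card))
    convert this using 1
    omega
  · by_cases hqB : q ∈ B
    · exact dv_mul_left (dv_pow (by omega) (hc2 p hpB q hqB hqp)) _
    · exact dv_mul_right (h2 q (by simp [hq, hqB])) _

theorem eq_of_smul {k : Type*} [Field k] {n : ℕ} {s a : ProjSpace k n} {t : k}
    (h : s.rep = t • a.rep) : s = a := by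
  by_contra hne
  have h3 := Projectivization.linearIndependent_pair_iff_ne.2 (Ne.symm hne)
  rw [LinearIndependent.pair_iff' a.rep_nonzero] at h3
  exact h3 t h.symm

theorem dir_lin {k : Type*} [Field k] {n : ℕ} (a b c s v : Fin n → k) :
    ∑ i, v i * eval s (pderiv i (lin a * lin b * lin c))
      = eval v (lin a) * eval s (lin b) * eval s (lin c)
        + eval s (lin a) * eval v (lin b) * eval s (lin c)
        + eval s (lin a) * eval s (lin b) * eval v (lin c) := by
  rw [lin_eval a v, lin_eval b v, lin_eval c v]
  simp only [Finset.mul_sum, Finset.sum_mul, ← Finset.sum_add_distrib]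
  refine Finset.sum_congr rfl fun i _ => ?_
  simp only [pderiv_mul, lin_pderiv, map_add, map_mul, eval_C]
  ring

theorem case_23 {k : Type*} [Field k] [CharZero k]
    (S : Finset (ProjSpace k 2)) (hS : Spans k 2 S) (hpos : 0 < S.card)
    (h : 0 < h0 k 2 3 S) : h1 k 2 3 S = 0 := by
  classical
  obtain ⟨p, hp⟩ := Finset.card_pos.1 hpos
  obtain ⟨B, hBS, hpB, hcard, hB, l, hc1, hc2, hc3⟩ := exists_dual hS hp
  have hz := main_vanish (d := 3) (by norm_num) B hB (by omega)
  by_cases hSB : S ⊆ B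
  · rw [Finset.Subset.antisymm hSB hBS]; exact hz
  exfalso
  obtain ⟨s, hsS, hsB⟩ := Finset.not_subset.1 hSB
  have hone : h0 k 2 3 B = 1 := by
    unfold h1 at hz
    rw [hcard, show Nat.choose (2+3) 2 = 10 by decide] at hz
    push_cast at hz
    omega
  obtain ⟨a, b, c, hab, hac, hbc, rfl⟩ := Finset.card_eq_three.1 hcard
  obtain ⟨f, hf0, hf, hfS⟩ := h0_pos.1 h
  have ha1 := hc1 a (by simp)
  have hb1 := hc1 b (by simp)
  have hc1' := hc1 c (by simp)
  have hab' := hc2 a (by simp) b (by simp) hab.symm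
  have hac' := hc2 a (by simp) c (by simp) hac.symm
  have hba' := hc2 b (by simp) a (by simp) hab
  have hbc' := hc2 b (by simp) c (by simp) hbc.symm
  have hca' := hc2 c (by simp) a (by simp) hac
  have hcb' := hc2 c (by simp) b (by simp) hbc
  set F := lin (l a) * lin (l b) * lin (l c) with hF
  have hFh : F.IsHomogeneous 3 := ((lin_homog _).mul (lin_homog _)).mul (lin_homog _)
  have hFB : ∀ q ∈ ({a, b, c} : Finset (ProjSpace k 2)), F ∈ doubleVanishing k q.rep := by
    intro q hq
    simp only [Finset.mem_insert, Finset.mem_singleton] at hq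
    rcases hq with rfl | rfl | rfl
    · exact dv_mul (by simp [hba']) hca'
    · exact dv_mul (by simp [hab']) hcb'
    · exact dv_mul_right (dv_mul hac' hbc') _
  unfold h0 at hone
  have hfm : f ∈ homogeneousSubmodule (Fin (2+1)) k 3 ⊓
      ⨅ p ∈ ({a, b, c} : Finset (ProjSpace k 2)), doubleVanishing k p.rep := by
    simp only [Submodule.mem_inf, Submodule.mem_iInf]
    exact ⟨hf, fun q hq => hfS q (hBS hq)⟩
  have hFm : F ∈ homogeneousSubmodule (Fin (2+1)) k 3 ⊓
      ⨅ p ∈ ({a, b, c} : Finset (ProjSpace k 2)), doubleVanishing k p.rep := by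
    simp only [Submodule.mem_inf, Submodule.mem_iInf]
    exact ⟨hFh, hFB⟩
  obtain ⟨t, ht⟩ := (finrank_eq_one_iff_of_nonzero' (⟨f, hfm⟩ : ↥(homogeneousSubmodule
    (Fin (2+1)) k 3 ⊓ ⨅ p ∈ ({a, b, c} : Finset (ProjSpace k 2)), doubleVanishing k p.rep))
    (fun h => hf0 (congrArg Subtype.val h))).1 hone ⟨F, hFm⟩
  have htF : t • f = F := congrArg Subtype.val ht
  have hFs : F ∈ doubleVanishing k s.rep := by
    rw [← htF]; exact Submodule.smul_mem _ _ (hfS s hsS)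
  have hgrad := (mem_dv.1 hFs).2
  have key : ∀ v : Fin (2+1) → k, eval v (lin (l a)) * eval s.rep (lin (l b)) * eval s.rep (lin (l c))
        + eval s.rep (lin (l a)) * eval v (lin (l b)) * eval s.rep (lin (l c))
        + eval s.rep (lin (l a)) * eval s.rep (lin (l b)) * eval v (lin (l c)) = 0 := by
    intro v
    rw [← dir_lin, ← hF]
    simp [hgrad]
  have k1 := key a.rep
  have k2 := key b.rep
  have k3 := key c.rep
  simp only [ha1, hb1, hc1', hab', hac', hba', hbc', hca', hcb', mul_zero, zero_mul, mul_one,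
    one_mul, add_zero, zero_add, mul_eq_zero] at k1 k2 k3
  have hexp := hc3 s.rep
  rw [Finset.sum_insert (by simp [hab, hac]), Finset.sum_insert (by simp [hbc]),
    Finset.sum_singleton] at hexp
  simp only [Finset.mem_insert, Finset.mem_singleton, not_or] at hsB
  obtain ⟨n1, n2, n3⟩ := hsB
  by_cases za : eval s.rep (lin (l a)) = 0
  · by_cases zb : eval s.rep (lin (l b)) = 0
    · rw [za, zb] at hexp
      exact n3 (eq_of_smul (by simpa using hexp))
    · have zc := k1.resolve_left zb
      rw [za, zc] at hexp
      exact n2 (eq_of_smul (by simpa using hexp))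
  · have zc := k2.resolve_left za
    have zb := k3.resolve_left za
    rw [zb, zc] at hexp
    exact n1 (eq_of_smul (by simpa using hexp))

theorem chain_rule {k : Type*} [Field k] {n : ℕ} (g : Fin n → Polynomial k)
    (f : MvPolynomial (Fin n) k) :
    Polynomial.derivative (aeval g f) = ∑ i, aeval g (pderiv i f) * Polynomial.derivative (g i) := by
  classical
  induction f using MvPolynomial.induction_on with
  | C a => simp [Polynomial.algebraMap_eq]
  | add p q hp hq => simp [hp, hq, add_mul, Finset.sum_add_distrib]
  | mul_X p j hp =>
    have e1 : ∀ i, aeval g (pderiv i (p * X j)) * Polynomial.derivative (g i)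
        = (aeval g (pderiv i p) * Polynomial.derivative (g i)) * g j
          + (if i = j then aeval g p * Polynomial.derivative (g j) else 0) := by
      intro i
      by_cases hij : i = j
      · subst hij
        rw [pderiv_mul, pderiv_X_self, map_add, map_mul, map_mul, aeval_X, map_one, if_pos rfl]
        ring
      · rw [pderiv_mul, pderiv_X_of_ne (Ne.symm hij), map_add, map_mul, map_mul, aeval_X, map_zero,
          if_neg hij]
        ring
    rw [Finset.sum_congr rfl (fun i _ => e1 i), Finset.sum_add_distrib, ← Finset.sum_mul, ← hp,
      Finset.sum_ite_eq' Finset.univ j, if_pos (Finset.mem_univ _), map_mul, aeval_X,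
      Polynomial.derivative_mul]

/-- points on the line -/
def lv {k : Type*} [Field k] {n : ℕ} (a b : Fin n) (t : k) : Fin n → k :=
  fun i => (if i = b then 1 else 0) + (if i = a then t else 0)

theorem line_contra {k : Type*} [Field k] [CharZero k] {n d m : ℕ} (hd : 0 < d)
    (hm : d < 2 * m + 1) {a b : Fin n} (hab : a ≠ b)
    {f : MvPolynomial (Fin n) k} (hf : f.IsHomogeneous d)
    (h0 : eval (lv a b 0) (pderiv b f) = 0) (h1 : eval (lv a b 0) (pderiv a f) ≠ 0)
    (h : ∀ j : ℕ, 0 < j → j ≤ m → f ∈ doubleVanishing k (lv a b (j : k))) : False := by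
  classical
  let g : Fin n → Polynomial k := fun i => (if i = b then 1 else 0) + (if i = a then Polynomial.X else 0)
  have hge : ∀ (t : k) (F : MvPolynomial (Fin n) k), (aeval g F).eval t = eval (lv a b t) F := by
    intro t F
    induction F using MvPolynomial.induction_on with
    | C a => simp [Polynomial.algebraMap_eq]
    | add p q hp hq => simp [hp, hq]
    | mul_X p j hp =>
      simp only [map_mul, aeval_X, Polynomial.eval_mul, hp, eval_X]
      congr 1
      simp only [g, lv, Polynomial.eval_add]
      split_ifs <;> simp
  set Q := aeval g f with hQ
  have hQd : ∀ t, (Polynomial.derivative Q).eval t = eval (lv a b t) (pderiv a f) := by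
    intro t
    rw [hQ, chain_rule, Finset.sum_eq_single a]
    · simp only [g, Polynomial.eval_mul, hge, if_neg hab]; simp
    · intro i _ hi
      simp only [g, if_neg hi]; split_ifs <;> simp
    · simp
  have hQ0 : Q ≠ 0 := by
    intro hz
    have := hQd 0
    rw [hz] at this
    exact h1 (by simpa using this.symm)
  have hdeg : Q.natDegree ≤ d := by
    have := MvPolynomial.aeval_natDegree_le (m := d) (n := 1) f hf.totalDegree_le g (fun i => by
      simp only [g]
      by_cases hb : i = b
      · rw [if_pos hb, if_neg (fun h => hab (h.symm.trans hb))]; simp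
      · by_cases ha : i = a
        · rw [if_neg hb, if_pos ha]; simp
        · rw [if_neg hb, if_neg ha]; simp)
    simpa using this
  have hr0 : Q.IsRoot 0 := by
    rw [Polynomial.IsRoot, hge]
    have he := euler_eval hf (lv a b 0)
    rw [Finset.sum_eq_single b] at he
    · rw [h0, mul_zero] at he
      rcases mul_eq_zero.1 he.symm with h | h
      · exact absurd h (by exact_mod_cast hd.ne')
      · exact h
    · intro i _ hi
      simp [lv, hi]
    · simp
  let T : Finset k := (Finset.Icc 1 m).image (fun j : ℕ => (j : k))
  have hTc : T.card = m := by
    rw [Finset.card_image_of_injective _ Nat.cast_injective]; simp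
  have h0T : (0 : k) ∉ T := by
    simp only [T, Finset.mem_image, Finset.mem_Icc, not_exists, not_and]
    rintro j ⟨hj, -⟩ hj0
    have : j = 0 := by exact_mod_cast hj0
    omega
  have hle : (0 ::ₘ (T.val + T.val)) ≤ Q.roots := by
    rw [Multiset.le_iff_count]
    intro t
    rw [Polynomial.count_roots, Multiset.count_cons, Multiset.count_add]
    by_cases ht : t ∈ T
    · have hne : t ≠ 0 := fun h => h0T (h ▸ ht)
      rw [Multiset.count_eq_one_of_mem T.nodup ht, if_neg hne]
      have : 1 < Q.rootMultiplicity t := by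
        rw [Polynomial.one_lt_rootMultiplicity_iff_isRoot hQ0]
        obtain ⟨j, hj, rfl⟩ := Finset.mem_image.1 ht
        rw [Finset.mem_Icc] at hj
        have := mem_dv.1 (h j (by omega) hj.2)
        exact ⟨by rw [Polynomial.IsRoot, hge]; exact this.1,
          by rw [Polynomial.IsRoot, hQd]; exact this.2 a⟩
      omega
    · rw [Multiset.count_eq_zero_of_notMem (by simpa using ht)]
      split_ifs with h
      · rw [h]
        have := (Polynomial.rootMultiplicity_pos hQ0).2 hr0
        omega
      · simp
  have hc := (Multiset.card_le_card hle).trans (Polynomial.card_roots' Q)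
  simp only [Multiset.card_cons, Multiset.card_add, Finset.card_val, hTc] at hc
  omega

/-- the vectors used in the construction -/
def vec {k : Type*} [Field k] {n : ℕ} (a b : Fin n) : ℕ ⊕ Fin n → (Fin n → k) :=
  Sum.elim (fun j => lv a b (j : k)) (fun i => Pi.single i 1)

theorem construct {k : Type*} [Field k] [CharZero k] {n d x : ℕ} (hd : 0 < d)
    (hx : n + (d+1)/2 ≤ x) {a b : Fin (n+1)} (hab : a ≠ b)
    {F : MvPolynomial (Fin (n+1)) k} (hF0 : F ≠ 0) (hF : F.IsHomogeneous d)
    (h1 : ∀ i, i ≠ a → i ≠ b → F ∈ doubleVanishing k (Pi.single i 1))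
    (h2 : ∀ t : k, F ∈ doubleVanishing k (lv a b t)) : (Terracini k n d x).Nonempty := by
  classical
  have hlb : ∀ t : k, lv a b t b = 1 := fun t => by simp [lv, hab.symm]
  have hla : ∀ t : k, lv a b t a = t := fun t => by simp [lv, hab]
  have hne : ∀ z : ℕ ⊕ Fin (n+1), vec (k := k) a b z ≠ 0 := by
    rintro (j | i) h
    · have := congrFun h b
      simp [vec, hlb] at this
    · have := congrFun h i
      simp [vec] at this
  let P : ℕ ⊕ Fin (n+1) → ProjSpace k n := fun z => Projectivization.mk k (vec a b z) (hne z)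
  let I : Finset (ℕ ⊕ Fin (n+1)) := (Finset.range (x - n + 1)).disjSum ({a, b}ᶜ)
  have hIc : I.card = x := by
    simp only [I, Finset.card_disjSum, Finset.card_range, Finset.card_compl, Fintype.card_fin,
      Finset.card_pair hab]
    have : 2 ≤ n + 1 := by
      have := Finset.card_le_univ ({a, b} : Finset (Fin (n+1)))
      rwa [Finset.card_pair hab, Fintype.card_fin] at this
    omega
  have hinj : ∀ z ∈ I, ∀ z' ∈ I, P z = P z' → z = z' := by
    intro z hz z' hz' h
    obtain ⟨t, ht⟩ := (Projectivization.mk_eq_mk_iff' k _ _ (hne z) (hne z')).1 h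
    rcases z with j | i <;> rcases z' with j' | i'
    · have e1 := congrFun ht b
      have e2 := congrFun ht a
      simp only [vec, Sum.elim_inl, Pi.smul_apply, smul_eq_mul, hlb, hla, mul_one] at e1 e2
      rw [e1, one_mul] at e2
      have : j' = j := by exact_mod_cast e2
      rw [this]
    · exfalso
      have hi : b ≠ i' := by
        rintro rfl; simp [I] at hz'
      have e1 := congrFun ht b
      simp [vec, hlb, Pi.single_apply, hi] at e1
    · exfalso
      have hi : b ≠ i := by
        rintro rfl; simp [I] at hz
      have e1 := congrFun ht b
      have e2 := congrFun ht i
      simp only [vec, Sum.elim_inl, Sum.elim_inr, Pi.smul_apply, smul_eq_mul, hlb, mul_one,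
        Pi.single_apply, if_neg hi] at e1 e2
      rw [e1] at e2
      simp at e2
    · have e1 := congrFun ht i
      simp only [vec, Sum.elim_inr, Pi.smul_apply, smul_eq_mul, Pi.single_apply, if_true] at e1
      by_contra hii
      have : i ≠ i' := fun h => hii (by rw [h])
      simp [this] at e1
  have hrep : ∀ z, ∃ c : k, c ≠ 0 ∧ (P z).rep = c • vec a b z := by
    intro z
    obtain ⟨u, hu⟩ := Projectivization.exists_smul_eq_mk_rep k (vec a b z) (hne z)
    exact ⟨u, u.ne_zero, hu.symm⟩
  have hdvrep : ∀ (f : MvPolynomial (Fin (n+1)) k), f.IsHomogeneous d → ∀ z,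
      (f ∈ doubleVanishing k (P z).rep ↔ f ∈ doubleVanishing k (vec a b z)) := by
    intro f hf z
    obtain ⟨c, hc, h⟩ := hrep z
    rw [h, dv_smul hf hc]
  have h0I : Sum.inl 0 ∈ I := by simp [I]
  refine ⟨I.image P, ?_, ?_, ?_, ?_⟩
  · rw [Finset.card_image_of_injOn (fun z hz z' hz' h => hinj z hz z' hz' h), hIc]
  · unfold Spans
    set W := Submodule.span k (Projectivization.rep '' ((I.image P : Finset _) : Set (ProjSpace k n)))
      with hW
    have hmem : ∀ z ∈ I, vec a b z ∈ W := by
      intro z hz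
      obtain ⟨c, hc, h⟩ := hrep z
      have h3 : (P z).rep ∈ W :=
        Submodule.subset_span ⟨P z, Finset.mem_coe.2 (Finset.mem_image_of_mem _ hz), rfl⟩
      rw [h] at h3
      exact (Submodule.smul_mem_iff _ hc).1 h3
    have hb : (Pi.single b 1 : Fin (n+1) → k) ∈ W := by
      convert hmem _ h0I using 1
      ext i
      simp [vec, lv, Pi.single_apply]
    have ha : (Pi.single a 1 : Fin (n+1) → k) ∈ W := by
      have h3 := hmem (Sum.inl 1) (by simp [I]; omega)
      convert W.sub_mem h3 hb using 1
      ext i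
      simp [vec, lv, Pi.single_apply]
    have hall : ∀ i, (Pi.single i 1 : Fin (n+1) → k) ∈ W := by
      intro i
      by_cases hia : i = a
      · rw [hia]; exact ha
      by_cases hib : i = b
      · rw [hib]; exact hb
      exact hmem (Sum.inr i) (by simp [I, hia, hib])
    rw [eq_top_iff, ← (Pi.basisFun k (Fin (n+1))).span_eq, Submodule.span_le]
    rintro _ ⟨i, rfl⟩
    simpa using hall i
  · refine h0_pos.2 ⟨F, hF0, hF, fun p hp => ?_⟩
    obtain ⟨z, hz, rfl⟩ := Finset.mem_image.1 hp
    rw [hdvrep F hF]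
    rcases z with j | i
    · exact h2 _
    · have : i ≠ a ∧ i ≠ b := by simpa [I] using hz
      exact h1 i this.1 this.2
  · refine h1_pos hd _ (P (Sum.inl 0)) (Finset.mem_image_of_mem _ h0I) (Pi.single a 1) ?_
    intro f hf hdv hg
    obtain ⟨c, hc, h⟩ := hrep (Sum.inl 0)
    have hv0 : vec a b (Sum.inl 0) = lv a b (0 : k) := by simp [vec]
    rw [h, hv0] at hg
    simp only [eval_smul_homog hf.pderiv] at hg
    refine line_contra (m := x - n) hd (by omega) hab hf ?_ ?_ ?_
    · have := hg b
      simpa [Pi.single_apply, hab.symm, hc] using this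
    · intro hz
      have := hg a
      simp [hz] at this
    · intro j hj hjm
      have hjI : Sum.inl j ∈ I := by simp [I]; omega
      refine (hdvrep f hf (Sum.inl j)).1 (hdv _ (Finset.mem_image_of_mem _ hjI) fun he => ?_)
      have := hinj _ hjI _ h0I he
      simp at this
      omega

theorem construct_all {k : Type*} [Field k] [CharZero k] {n d x : ℕ} (hn : 2 ≤ n) (hd : 3 ≤ d)
    (hnd : (n, d) ≠ (2, 3)) (hx : n + (d+1)/2 ≤ x) : (Terracini k n d x).Nonempty := by
  have X0 : ∀ i : Fin (n+1), (X i : MvPolynomial (Fin (n+1)) k) ≠ 0 := fun i => X_ne_zero i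
  by_cases h3 : 3 ≤ n
  · let i0 : Fin (n+1) := ⟨0, by omega⟩
    let i1 : Fin (n+1) := ⟨1, by omega⟩
    let i2 : Fin (n+1) := ⟨2, by omega⟩
    let i3 : Fin (n+1) := ⟨3, by omega⟩
    have hd2 : d - 2 ≠ 0 := by omega
    refine construct (a := i3) (b := i2) (F := X i0 ^ (d-2) * (X i1 * X i2)) (by omega) hx
      (by simp [i3, i2]) (mul_ne_zero (pow_ne_zero _ (X0 _)) (mul_ne_zero (X0 _) (X0 _))) ?_ ?_ ?_
    · have := ((isHomogeneous_X k i0).pow (d-2)).mul ((isHomogeneous_X k i1).mul (isHomogeneous_X k i2))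
      convert this using 1
      omega
    · intro i hi3 hi2
      by_cases hi0 : i = i0
      · subst hi0
        exact dv_mul_left (dv_mul (by simp [i0, i1, Pi.single_apply]) (by simp [i0, i2, Pi.single_apply])) _
      · refine dv_mul ?_ ?_
        · simp [Pi.single_apply, Ne.symm hi0, hd2]
        · simp [Pi.single_apply, Ne.symm hi2]
    · intro t
      refine dv_mul ?_ ?_
      · simp [lv, i0, i2, i3, hd2]
      · simp [lv, i1, i2, i3]
  · obtain rfl : n = 2 := by omega
    have hd4 : 4 ≤ d := by
      rcases Nat.lt_or_ge d 4 with h | h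
      · exfalso; apply hnd; rw [show d = 3 by omega]
      · exact h
    refine construct (a := 2) (b := 0) (F := X 0 ^ (d-2) * X 1 ^ 2) (by omega) hx
      (by decide) (mul_ne_zero (pow_ne_zero _ (X0 _)) (pow_ne_zero _ (X0 _))) ?_ ?_ ?_
    · have := ((isHomogeneous_X k (0 : Fin 3)).pow (d-2)).mul ((isHomogeneous_X k (1 : Fin 3)).pow 2)
      convert this using 1
      omega
    · intro i hi2 hi0
      exact dv_mul_right (dv_pow (by omega) (by simp [Pi.single_apply, Ne.symm hi0])) _
    · intro t
      exact dv_mul_left (dv_pow le_rfl (by simp [lv])) _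

end TerrAux


/-- Theorem 1 (characterization of nonempty Terracini loci).
(i) If `n = 1` or `d = 2` then `T(n,d;x) = ∅`; (ii) `T(2,3;x) = ∅`;
(iii) for `n ≥ 2`, `d ≥ 3`, `(n,d) ≠ (2,3)`, `T(n,d;x) ≠ ∅ ↔ x ≥ n + ⌈d/2⌉`. -/
theorem terracini_nonempty_characterization
    (k : Type*) [Field k] [IsAlgClosed k] [CharZero k]
    (n d x : ℕ) (hn : 0 < n) (hd : 0 < d) (hx : 0 < x) :
    ((n = 1 ∨ d = 2) → Terracini k n d x = ∅) ∧
    (Terracini k 2 3 x = ∅) ∧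
    (2 ≤ n → 3 ≤ d → (n, d) ≠ (2, 3) →
      ((Terracini k n d x).Nonempty ↔ n + (d + 1) / 2 ≤ x)) := by
  refine ⟨?_, ?_, ?_⟩
  · intro h
    rw [Set.eq_empty_iff_forall_notMem]
    rintro S ⟨hc, hS, h0, h1⟩
    rcases h with rfl | rfl
    · have := TerrAux.case_n1 hd S (by omega) h0
      omega
    · exact TerrAux.case_d2 S hS h0
  · rw [Set.eq_empty_iff_forall_notMem]
    rintro S ⟨hc, hS, h0, h1⟩
    have := TerrAux.case_23 S hS (by omega) h0
    omega
  · intro hn2 hd3 hnd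
    constructor
    · rintro ⟨S, hc, hS, h0, h1⟩
      by_contra hlt
      have := TerrAux.main_vanish hd S hS (by omega)
      omega
    · exact TerrAux.construct_all hn2 hd3 hnd
end

section
/- Fix integers n ≥ 2, d ≥ 1 and x ≥ 1, and let S ∈ T(n,d;x)' be a minimally Terracini set with respect to O(d). Then: (i) h^1(I_{2S}(d+1)) = 0; (ii) for every integer t ≥ d+1, S ∉ T(n,t;x); (iii) for every integer t with 1 ≤ t ≤ d−1, S ∉ T(n,t;x)'. In particular, d is the unique degree for which S is minimally Terracini, and d is the maximal integer t such that h^1(I_{2S}(t)) > 0. -/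
open MvPolynomial

/-- The dimension of the space of forms. -/
theorem tl_finrank_forms (k : Type*) [Field k] (n d : ℕ) :
    Module.finrank k ↥(homogeneousSubmodule (Fin (n+1)) k d) = (n+d).choose n := by
  classical
  have e : (homogeneousSubmodule (Fin (n+1)) k d) ≃ₗ[k]
      ({m : Fin (n+1) →₀ ℕ | m.degree = d} →₀ k) := by
    rw [homogeneousSubmodule_eq_finsupp_supported]
    exact (LinearEquiv.submoduleMap (AddMonoidAlgebra.coeffLinearEquiv k)
        (AddMonoidAlgebra.supported k k {m : Fin (n+1) →₀ ℕ | m.degree = d})).trans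
      ((LinearEquiv.ofEq _ (Finsupp.supported k k {m : Fin (n+1) →₀ ℕ | m.degree = d}) (by
        ext f
        simp only [Submodule.mem_map]
        constructor
        · rintro ⟨y, hy, rfl⟩
          exact hy
        · intro hf
          exact ⟨(AddMonoidAlgebra.coeffLinearEquiv k).symm f, hf, by simp⟩)).trans
        (Finsupp.supportedEquivFinsupp (R := k) (M := k) _))
  have e2 : {m : Fin (n+1) →₀ ℕ | m.degree = d} ≃
      (Finset.finsuppAntidiag (Finset.univ : Finset (Fin (n+1))) d) :=
    Equiv.subtypeEquivRight (fun m => by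
      simp [Finset.mem_finsuppAntidiag, Finsupp.degree_eq_sum])
  rw [(e.trans (Finsupp.domLCongr e2)).finrank_eq, Module.finrank_finsupp_self,
    Fintype.card_coe, Finset.card_finsuppAntidiag_nat_eq_choose]
  simp only [Finset.card_univ, Fintype.card_fin]
  rw [show n + 1 + d - 1 = n + d by omega, ← Nat.choose_symm_add]

/-- A nontrivial linear relation among the first-order conditions at the points of `A`. -/
def tlRel (k : Type*) [Field k] (n d : ℕ) (A : Finset (ProjSpace k n)) : Prop :=
  ∃ w : ProjSpace k n → Fin (n+1) → k, (∃ p ∈ A, w p ≠ 0) ∧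
    ∀ f : MvPolynomial (Fin (n+1)) k, f.IsHomogeneous d →
      ∑ p ∈ A, ∑ i, w p i * eval p.rep (pderiv i f) = 0

theorem tl_mem_doubleVanishing {k : Type*} [Field k] {n : ℕ} (v : Fin n → k)
    (f : MvPolynomial (Fin n) k) :
    f ∈ doubleVanishing k v ↔ eval v f = 0 ∧ ∀ i, eval v (pderiv i f) = 0 := by
  simp [doubleVanishing, evalLM, aeval_eq_eval]

theorem tl_euler {k : Type*} [Field k] {n d : ℕ} (v : Fin n → k)
    {f : MvPolynomial (Fin n) k} (hf : f.IsHomogeneous d) :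
    ∑ i, v i * eval v (pderiv i f) = (d : k) * eval v f := by
  have := congrArg (eval v) hf.sum_X_mul_pderiv
  simpa using this

/-- The evaluation of all partial derivatives at the points of `A`. -/
noncomputable def tlMap (k : Type*) [Field k] (n d : ℕ) (A : Finset (ProjSpace k n)) :
    ↥(homogeneousSubmodule (Fin (n+1)) k d) →ₗ[k] (A × Fin (n+1) → k) :=
  LinearMap.pi (fun q => ((aeval q.1.1.rep).toLinearMap.comp
    (pderiv q.2).toLinearMap).comp (Submodule.subtype _))

theorem tlMap_apply (k : Type*) [Field k] (n d : ℕ) (A : Finset (ProjSpace k n))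
    (f : ↥(homogeneousSubmodule (Fin (n+1)) k d)) (q : A × Fin (n+1)) :
    tlMap k n d A f q = eval q.1.1.rep (pderiv q.2 f.1) := by
  simp [tlMap, aeval_eq_eval]

theorem tl_h0_eq (k : Type*) [Field k] [CharZero k] (n d : ℕ) (hd : 1 ≤ d)
    (A : Finset (ProjSpace k n)) :
    h0 k n d A = Module.finrank k (LinearMap.ker (tlMap k n d A)) := by
  have : homogeneousSubmodule (Fin (n+1)) k d ⊓ ⨅ p ∈ A, doubleVanishing k p.rep
      = (LinearMap.ker (tlMap k n d A)).map (Submodule.subtype _) := by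
    ext f
    simp only [Submodule.mem_inf, Submodule.mem_iInf, tl_mem_doubleVanishing, Submodule.mem_map,
      LinearMap.mem_ker]
    constructor
    · rintro ⟨hf, h⟩
      refine ⟨⟨f, hf⟩, ?_, rfl⟩
      ext q
      rw [tlMap_apply]
      exact (h q.1.1 q.1.2).2 q.2
    · rintro ⟨y, hy, rfl⟩
      refine ⟨y.2, fun p hp => ?_⟩
      have h2 : ∀ i, eval p.rep (pderiv i y.1) = 0 := fun i => by
        have := congrFun hy (⟨p, hp⟩, i)
        rwa [tlMap_apply] at this
      refine ⟨?_, h2⟩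
      have := tl_euler p.rep (show y.1.IsHomogeneous d from y.2)
      simp only [h2, mul_zero, Finset.sum_const_zero] at this
      have hd' : (d : k) ≠ 0 := by exact_mod_cast (by omega : d ≠ 0)
      simpa [hd'] using this.symm
  unfold h0
  rw [this]
  exact (Submodule.equivMapOfInjective _ (Submodule.subtype_injective _) _).finrank_eq.symm

theorem tl_h1_eq (k : Type*) [Field k] [CharZero k] (n d : ℕ) (hd : 1 ≤ d)
    (A : Finset (ProjSpace k n)) :
    h1 k n d A + Module.finrank k (LinearMap.range (tlMap k n d A)) = (n+1) * A.card := by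
  have : Module.Finite k ↥(homogeneousSubmodule (Fin (n+1)) k d) :=
    Module.Finite.iff_fg.2 (homogeneousSubmodule_fg (Fin (n+1)) k d)
  have h := LinearMap.finrank_range_add_finrank_ker (tlMap k n d A)
  rw [← tl_h0_eq k n d hd, tl_finrank_forms] at h
  unfold h1
  zify at h
  linarith

theorem tl_surj_iff (k : Type*) [Field k] (n d : ℕ) (A : Finset (ProjSpace k n)) :
    tlRel k n d A ↔ LinearMap.range (tlMap k n d A) ≠ ⊤ := by
  classical
  constructor
  · rintro ⟨w, ⟨p, hp, hw⟩, h⟩ htop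
    obtain ⟨i, hi⟩ := Function.ne_iff.1 hw
    have hm : Pi.single ((⟨p, hp⟩, i) : A × Fin (n+1)) (1:k) ∈
        LinearMap.range (tlMap k n d A) := by rw [htop]; trivial
    obtain ⟨f, hf⟩ := hm
    have h2 := h f.1 f.2
    rw [← Finset.sum_coe_sort A] at h2
    have h3 : ∑ q : A × Fin (n+1), w q.1.1 q.2 * tlMap k n d A f q = 0 := by
      rw [Fintype.sum_prod_type, ← h2]
      simp only [tlMap_apply]
    rw [hf] at h3
    simp [Pi.single_apply] at h3
    exact hi h3
  · intro h
    obtain ⟨φ, hφ, hle⟩ := Submodule.exists_le_ker_of_lt_top _ (lt_top_iff_ne_top.2 h)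
    have hφe : ∀ y, φ y = ∑ q, φ (Pi.single q 1) * y q := fun y => by
      conv_lhs => rw [LinearMap.pi_apply_eq_sum_univ φ y]
      refine Finset.sum_congr rfl fun q _ => ?_
      rw [smul_eq_mul, mul_comm]
      congr 2
      ext j
      simp [Pi.single_apply, eq_comm]
    refine ⟨fun p i => if hp : p ∈ A then φ (Pi.single (⟨p, hp⟩, i) 1) else 0, ?_, ?_⟩
    · by_contra hc
      push Not at hc
      apply hφ
      ext1
      ext1
      rename_i q
      have := congrFun (hc q.1.1 q.1.2) q.2
      simpa using this
    · intro f hf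
      have h1 : φ (tlMap k n d A ⟨f, hf⟩) = 0 := hle ⟨_, rfl⟩
      rw [hφe, Fintype.sum_prod_type] at h1
      rw [← Finset.sum_coe_sort A, ← h1]
      refine Finset.sum_congr rfl fun p _ => Finset.sum_congr rfl fun i _ => ?_
      rw [tlMap_apply]
      simp

theorem tl_h1_dich (k : Type*) [Field k] [CharZero k] (n d : ℕ) (hd : 1 ≤ d)
    (A : Finset (ProjSpace k n)) :
    (tlRel k n d A ∧ 0 < h1 k n d A) ∨ (¬ tlRel k n d A ∧ h1 k n d A = 0) := by
  have h := tl_h1_eq k n d hd A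
  have hc : Module.finrank k (A × Fin (n+1) → k) = (n+1) * A.card := by
    rw [Module.finrank_fintype_fun_eq_card, Fintype.card_prod, Fintype.card_coe,
      Fintype.card_fin, mul_comm]
  by_cases hr : tlRel k n d A
  · left
    refine ⟨hr, ?_⟩
    have := Submodule.finrank_lt ((tl_surj_iff k n d A).1 hr)
    rw [hc] at this
    zify at this
    linarith
  · right
    refine ⟨hr, ?_⟩
    rw [tl_surj_iff, not_not] at hr
    rw [hr, finrank_top, hc] at h
    push_cast at h
    linarith

/-- The relation in degree `d` obtained by multiplying by the linear form `l`. -/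
def tlMul {k : Type*} [Field k] {m : ℕ} (d : ℕ) (l v w : Fin m → k) : Fin m → k :=
  fun i => (d : k) * (l ⬝ᵥ v) * w i + (l ⬝ᵥ w) * v i

theorem tlMul_ne_zero {k : Type*} [Field k] [CharZero k] {m : ℕ} (d : ℕ) (hd : 1 ≤ d)
    (l v w : Fin m → k) (hl : l ⬝ᵥ v ≠ 0) (hw : w ≠ 0) : tlMul d l v w ≠ 0 := by
  intro h
  have hd' : (d : k) ≠ 0 := by exact_mod_cast (by omega : d ≠ 0)
  have hd2 : (d : k) + 1 ≠ 0 := by exact_mod_cast (by omega : d + 1 ≠ 0)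
  have h1 : ((d : k) + 1) * (l ⬝ᵥ v) * (l ⬝ᵥ w) = 0 := by
    have h2 : l ⬝ᵥ tlMul d l v w = ((d : k) + 1) * (l ⬝ᵥ v) * (l ⬝ᵥ w) := by
      have : tlMul d l v w = ((d : k) * (l ⬝ᵥ v)) • w + (l ⬝ᵥ w) • v := by
        ext i; simp [tlMul]
      rw [this, dotProduct_add, dotProduct_smul, dotProduct_smul]
      simp only [smul_eq_mul]
      ring
    rw [← h2, h, dotProduct_zero]
  have h3 : l ⬝ᵥ w = 0 := by
    simpa [hd2, hl] using h1
  apply hw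
  ext i
  have := congrFun h i
  simpa [tlMul, h3, hd', hl] using this

theorem tl_mul_rel {k : Type*} [Field k] (n d : ℕ)
    (A : Finset (ProjSpace k n)) (w : ProjSpace k n → Fin (n+1) → k)
    (h : ∀ f : MvPolynomial (Fin (n+1)) k, f.IsHomogeneous (d+1) →
      ∑ p ∈ A, ∑ i, w p i * eval p.rep (pderiv i f) = 0) (l : Fin (n+1) → k)
    (g : MvPolynomial (Fin (n+1)) k) (hg : g.IsHomogeneous d) :
    ∑ p ∈ A, ∑ i, tlMul d l p.rep (w p) i * eval p.rep (pderiv i g) = 0 := by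
  classical
  have hL : (∑ j, C (l j) * X j : MvPolynomial (Fin (n+1)) k).IsHomogeneous 1 :=
    IsHomogeneous.sum _ _ _ fun j _ => by
      simpa using (isHomogeneous_C (Fin (n+1)) (l j)).mul (isHomogeneous_X k j)
  have h1 := h (g * ∑ j, C (l j) * X j) (hg.mul hL)
  have h2 : ∀ p ∈ A, ∑ i, tlMul d l p.rep (w p) i * eval p.rep (pderiv i g) =
      (d : k) * ∑ i, w p i * eval p.rep (pderiv i (g * ∑ j, C (l j) * X j)) := by
    intro p _
    have he : eval p.rep (∑ j, C (l j) * X j) = l ⬝ᵥ p.rep := by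
      simp [dotProduct]
    have hpd : ∀ i, pderiv i (∑ j, C (l j) * X j : MvPolynomial (Fin (n+1)) k) = C (l i) := by
      intro i
      simp [pderiv_X, Pi.single_apply]
    have hE := tl_euler p.rep hg
    have e1 : ∑ i, tlMul d l p.rep (w p) i * eval p.rep (pderiv i g)
        = (d : k) * (l ⬝ᵥ p.rep) * (∑ i, w p i * eval p.rep (pderiv i g))
          + (l ⬝ᵥ w p) * ∑ i, p.rep i * eval p.rep (pderiv i g) := by
      simp only [Finset.mul_sum, ← Finset.sum_add_distrib, tlMul]
      exact Finset.sum_congr rfl fun i _ => by ring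
    have e2 : ∑ i, w p i * eval p.rep (pderiv i (g * ∑ j, C (l j) * X j))
        = (l ⬝ᵥ p.rep) * (∑ i, w p i * eval p.rep (pderiv i g))
          + (l ⬝ᵥ w p) * eval p.rep g := by
      simp only [Derivation.leibniz, hpd, smul_eq_mul, map_add, map_mul, he, eval_C]
      rw [Finset.mul_sum, show l ⬝ᵥ w p = ∑ i, l i * w p i from rfl, Finset.sum_mul, ← Finset.sum_add_distrib]
      exact Finset.sum_congr rfl fun i _ => by ring
    rw [e1, e2, hE]
    ring
  rw [Finset.sum_congr rfl h2, ← Finset.mul_sum, h1, mul_zero]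

theorem tl_exists_form {k : Type*} [Field k] {m : ℕ} (W : Submodule k (Fin m → k))
    (v : Fin m → k) (hv : v ∉ W) : ∃ l : Fin m → k, l ⬝ᵥ v ≠ 0 ∧ ∀ u ∈ W, l ⬝ᵥ u = 0 := by
  obtain ⟨φ, h1, h2⟩ := Submodule.exists_le_ker_of_notMem hv
  have hφ : ∀ u, (fun i => φ (fun j => if i = j then 1 else 0)) ⬝ᵥ u = φ u := fun u => by
    rw [LinearMap.pi_apply_eq_sum_univ φ u]
    simp [dotProduct, mul_comm]
  refine ⟨fun i => φ (fun j => if i = j then 1 else 0), ?_, fun u hu => ?_⟩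
  · rw [hφ]; exact h1
  · rw [hφ]; exact h2 hu

theorem tl_rel_down {k : Type*} [Field k] [CharZero k] (n d : ℕ) (hd : 1 ≤ d)
    (A : Finset (ProjSpace k n)) (h : tlRel k n (d+1) A) : tlRel k n d A := by
  obtain ⟨w, ⟨p, hp, hw⟩, h⟩ := h
  obtain ⟨l, hl, -⟩ := tl_exists_form ⊥ p.rep (by simpa using p.rep_nonzero)
  exact ⟨fun q => tlMul d l q.rep (w q), ⟨p, hp, tlMul_ne_zero d hd _ _ _ hl hw⟩,
    fun g hg => tl_mul_rel n d A w h l g hg⟩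

theorem tl_key {k : Type*} [Field k] [CharZero k] (n d : ℕ) (hn : 2 ≤ n) (hd : 1 ≤ d)
    (S : Finset (ProjSpace k n)) (hS : Spans k n S)
    (hmin : ∀ A, A ⊂ S → ¬ tlRel k n d A) : ¬ tlRel k n (d+1) S := by
  classical
  rintro ⟨w, ⟨p, hp, hw⟩, h⟩
  have key : ∀ l q, q ∈ S → tlMul d l q.rep (w q) = 0 → ∀ r ∈ S, tlMul d l r.rep (w r) = 0 := by
    intro l q hq hq0 r hr
    by_contra hr0
    refine hmin (S.erase q) (Finset.erase_ssubset hq)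
      ⟨fun q => tlMul d l q.rep (w q), ⟨r, ?_, hr0⟩, fun g hg => ?_⟩
    · rw [Finset.mem_erase]
      refine ⟨?_, hr⟩
      rintro rfl
      exact hr0 hq0
    · have := tl_mul_rel n d S w h l g hg
      rw [← Finset.add_sum_erase S _ hq] at this
      simpa [hq0] using this
  have hall : ∀ q ∈ S, w q ≠ 0 := by
    intro q hq hq0
    obtain ⟨l, hl, -⟩ := tl_exists_form ⊥ p.rep (by simpa using p.rep_nonzero)
    refine tlMul_ne_zero d hd _ _ _ hl hw (key l q hq ?_ p hp)
    ext i
    simp [tlMul, hq0]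
  have hsub : ∀ q ∈ S, q.rep ∈ Submodule.span k {p.rep, w p} := by
    intro q hq
    by_contra hc
    obtain ⟨l, hl, hl2⟩ := tl_exists_form _ _ hc
    refine tlMul_ne_zero d hd _ _ _ hl (hall q hq) (key l p hp ?_ q hq)
    have h1 := hl2 _ (Submodule.subset_span (by simp : p.rep ∈ ({p.rep, w p} : Set _)))
    have h2 := hl2 _ (Submodule.subset_span (by simp : w p ∈ ({p.rep, w p} : Set _)))
    ext i
    simp [tlMul, h1, h2]
  have htop : Submodule.span k {p.rep, w p} = ⊤ := by
    rw [eq_top_iff, ← hS, Submodule.span_le]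
    rintro _ ⟨q, hq, rfl⟩
    exact hsub q hq
  have h1 : Module.finrank k (Submodule.span k ({p.rep, w p} : Set (Fin (n+1) → k))) ≤ 2 := by
    have := finrank_span_finset_le_card (R := k) ({p.rep, w p} : Finset (Fin (n+1) → k))
    have h3 := Finset.card_le_two (a := p.rep) (b := w p)
    simp only [Finset.coe_insert, Finset.coe_singleton] at this
    exact this.trans h3
  rw [htop, finrank_top, Module.finrank_fintype_fun_eq_card, Fintype.card_fin] at h1
  omega

theorem tl_h0_zero {k : Type*} [Field k] (n : ℕ) (S : Finset (ProjSpace k n))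
    (hS : 1 ≤ S.card) : h0 k n 0 S = 0 := by
  obtain ⟨p, hp⟩ := Finset.card_pos.1 hS
  have : homogeneousSubmodule (Fin (n+1)) k 0 ⊓ ⨅ p ∈ S, doubleVanishing k p.rep = ⊥ := by
    rw [eq_bot_iff]
    rintro f ⟨hf, hf2⟩
    have h1 : f ∈ doubleVanishing k p.rep := by
      simp only [SetLike.mem_coe, Submodule.mem_iInf] at hf2
      exact hf2 p hp
    rw [tl_mem_doubleVanishing] at h1
    have hf' : f.IsHomogeneous 0 := hf
    have h3 : f = C (coeff 0 f) := by
      rw [← totalDegree_eq_zero_iff_eq_C]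
      exact (totalDegree_zero_iff_isHomogeneous _).2 hf'
    have h4 := h1.1
    rw [h3, eval_C] at h4
    rw [h4, C_0] at h3
    simpa using h3
  unfold h0
  rw [this, finrank_bot]

/-- Above the minimally Terracini degree, `h1` vanishes. -/
theorem tl_h1_above {k : Type*} [Field k] [CharZero k] (n d x : ℕ) (hn : 2 ≤ n) (hd : 1 ≤ d)
    (S : Finset (ProjSpace k n)) (hS : S ∈ minTerracini k n d x) (t : ℕ) (ht : d + 1 ≤ t) :
    h1 k n t S = 0 := by
  obtain ⟨⟨-, hsp, -, -⟩, hmin⟩ := hS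
  have hnot : ¬ tlRel k n t S := by
    induction t, ht using Nat.le_induction with
    | base =>
      refine tl_key n d hn hd S hsp fun A hA hr => ?_
      rcases tl_h1_dich k n d hd A with ⟨-, h⟩ | ⟨h, -⟩
      · have := hmin A hA
        omega
      · exact h hr
    | succ t ht ih => exact fun h => ih (tl_rel_down n t (by omega) S h)
  rcases tl_h1_dich k n t (by omega) S with ⟨h, -⟩ | ⟨-, h⟩
  · exact absurd h hnot
  · exact h

/-- Theorem (uniqueness of the minimally Terracini degree).
If `S ∈ T(n,d;x)'` then: (i) `h^1(I_{2S}(d+1)) = 0`; (ii) `S ∉ T(n,t;x)` for `t ≥ d+1`;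
(iii) `S ∉ T(n,t;x)'` for `1 ≤ t ≤ d-1`. In particular `d` is the unique degree for which
`S` is minimally Terracini, and `d` is the greatest `t` with `h^1(I_{2S}(t)) > 0`. -/
theorem minTerracini_degree_unique
    (k : Type*) [Field k] [IsAlgClosed k] [CharZero k]
    (n d x : ℕ) (hn : 2 ≤ n) (hd : 1 ≤ d) (hx : 1 ≤ x)
    (S : Finset (ProjSpace k n)) (hS : S ∈ minTerracini k n d x) :
    h1 k n (d + 1) S = 0 ∧
    (∀ t : ℕ, d + 1 ≤ t → S ∉ Terracini k n t x) ∧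
    (∀ t : ℕ, 1 ≤ t → t ≤ d - 1 → S ∉ minTerracini k n t x) ∧
    (∀ t : ℕ, S ∈ minTerracini k n t x → t = d) ∧
    IsGreatest {t : ℕ | 0 < h1 k n t S} d := by
  have habove := tl_h1_above n d x hn hd S hS
  have hpos : 0 < h1 k n d S := hS.1.2.2.2
  have huniq : ∀ t : ℕ, S ∈ minTerracini k n t x → t = d := by
    intro t ht
    have htpos : 0 < h1 k n t S := ht.1.2.2.2
    have ht1 : 1 ≤ t := by
      by_contra h0'
      obtain rfl : t = 0 := by omega
      have h0pos : 0 < h0 k n 0 S := ht.1.2.2.1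
      have hcard : S.card = x := ht.1.1
      rw [tl_h0_zero n S (by omega)] at h0pos
      omega
    rcases lt_trichotomy t d with h | h | h
    · have := tl_h1_above n t x hn ht1 S ht d h
      omega
    · exact h
    · have := habove t h
      omega
  refine ⟨habove _ le_rfl, ?_, ?_, huniq, hpos, ?_⟩
  · intro t ht hT
    have h2 : 0 < h1 k n t S := hT.2.2.2
    have := habove t ht
    omega
  · intro t ht1 htd hT
    have := huniq t hT
    omega
  · intro t ht
    by_contra hlt
    have h2 : 0 < h1 k n t S := ht
    have := habove t (by omega)
    omega
end

section
/- Assume n ≥ 2 and d ≥ 2, and fix an integer x such that x ≤ n + ⌈d/2⌉ − 1. Then T(n,d;x) = ∅. -/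
open MvPolynomial

theorem TL.mem_dv {k : Type*} [Field k] {m : ℕ} (v : Fin m → k) (f : MvPolynomial (Fin m) k) :
    f ∈ doubleVanishing k v ↔ aeval v f = 0 ∧ ∀ i, aeval v (pderiv i f) = 0 := by
  simp [doubleVanishing, evalLM, Submodule.mem_iInf]

/-- The linear form with coefficient vector `a`. -/
noncomputable def TL.lin (k : Type*) [Field k] (m : ℕ) : (Fin m → k) →ₗ[k] MvPolynomial (Fin m) k :=
  Fintype.linearCombination k (fun i : Fin m => (X i : MvPolynomial (Fin m) k))

theorem TL.lin_apply {k : Type*} [Field k] {m : ℕ} (a : Fin m → k) :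
    TL.lin k m a = ∑ i, C (a i) * X i := by
  simp [TL.lin, Fintype.linearCombination_apply, MvPolynomial.smul_eq_C_mul]

theorem TL.lin_hom {k : Type*} [Field k] {m : ℕ} (a : Fin m → k) :
    (TL.lin k m a).IsHomogeneous 1 := by
  rw [TL.lin_apply]
  apply MvPolynomial.IsHomogeneous.sum
  intro i _
  simpa using (isHomogeneous_C (Fin m) (a i)).mul (isHomogeneous_X k i)

theorem TL.pderiv_lin {k : Type*} [Field k] {m : ℕ} (a : Fin m → k) (i : Fin m) :
    pderiv i (TL.lin k m a) = C (a i) := by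
  classical
  rw [TL.lin_apply]
  simp [map_sum, pderiv_X, Pi.single_apply]

theorem TL.exists_lin {k : Type*} [Field k] {m : ℕ} (P : Submodule k (Fin m → k)) (v : Fin m → k)
    (hv : v ∉ P) :
    ∃ f : MvPolynomial (Fin m) k, f.IsHomogeneous 1 ∧ aeval v f ≠ 0 ∧ ∀ w ∈ P, aeval w f = 0 := by
  classical
  obtain ⟨φ, h1, h2⟩ := Submodule.exists_le_ker_of_notMem hv
  have key : ∀ w, aeval w (TL.lin k m (fun i => φ (Pi.single i 1))) = φ w := by
    intro w
    conv_rhs => rw [LinearMap.pi_apply_eq_sum_univ φ w]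
    rw [TL.lin_apply]
    simp only [map_sum, map_mul, aeval_X, smul_eq_mul, algHom_C, Algebra.algebraMap_self_apply]
    refine Finset.sum_congr rfl fun i _ => ?_
    rw [mul_comm]
    congr 2
    ext j
    simp [Pi.single_apply, eq_comm]
  refine ⟨TL.lin k m (fun i => φ (Pi.single i 1)), TL.lin_hom _, ?_, ?_⟩
  · rw [key]; exact h1
  · intro w hw
    rw [key]; exact h2 hw

theorem TL.sq_mul_mem {k : Type*} [Field k] {m : ℕ} (v : Fin m → k) (L H : MvPolynomial (Fin m) k)
    (h : aeval v L = 0) : L ^ 2 * H ∈ doubleVanishing k v := by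
  rw [TL.mem_dv]
  have h' : eval v L = 0 := by simpa using h
  refine ⟨by simp [h'], fun i => ?_⟩
  simp [Derivation.leibniz, Derivation.leibniz_pow, h']

theorem TL.finrank_hom (k : Type*) [Field k] (n d : ℕ) :
    Module.Finite k (homogeneousSubmodule (Fin (n+1)) k d) ∧
    Module.finrank k (homogeneousSubmodule (Fin (n+1)) k d) = (n+d).choose n := by
  let e : Sym (Fin (n+1)) d ≃ {P : Fin (n+1) →₀ ℕ | P.degree = d} :=
    (Sym.equivNatSum (Fin (n+1)) d).trans (Equiv.subtypeEquivRight (by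
      intro P; rfl))
  rw [homogeneousSubmodule_eq_finsupp_supported]
  let B := (basisRestrictSupport k {P : Fin (n+1) →₀ ℕ | P.degree = d}).reindex e.symm
  refine ⟨Module.Finite.of_basis B, ?_⟩
  have := Module.finrank_eq_card_basis B
  rw [Sym.card_sym_eq_choose] at this
  refine this.trans ?_
  rw [Fintype.card_fin, show n + 1 + d - 1 = n + d by omega, Nat.choose_symm_add]

theorem TL.exists_G {k : Type*} [Field k] (n d : ℕ) (S : Finset (ProjSpace k n))
    (hS : Spans k n S) (hd : 2 ≤ d) (hx : S.card ≤ n + (d + 1) / 2 - 1) (p : ProjSpace k n) (hp : p ∈ S) :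
    ∃ G : MvPolynomial (Fin (n+1)) k, G.IsHomogeneous (d - 1) ∧ aeval p.rep G ≠ 0 ∧
      ∀ q ∈ S, q ≠ p → ∀ H, G * H ∈ doubleVanishing k q.rep := by
  classical
  have hli : LinearIndepOn k (Projectivization.rep : ProjSpace k n → _) {p} := by
    simpa using p.rep_nonzero
  obtain ⟨b, hbS, hpb, hspan, hb⟩ := exists_linearIndepOn_extension hli
    (t := (S : Set (ProjSpace k n))) (by simpa using hp)
  have htop : Submodule.span k (Projectivization.rep '' b) = ⊤ := by
    rw [eq_top_iff, ← hS]
    exact Submodule.span_le.2 hspan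
  lift b to Finset (ProjSpace k n) using S.finite_toSet.subset hbS
  have hcard : n + 1 ≤ b.card := by
    have h1 := finrank_span_finset_le_card (R := k) (b.image Projectivization.rep)
    rw [Finset.coe_image, Set.finrank, htop, finrank_top] at h1
    simp only [Module.finrank_fin_fun] at h1
    exact h1.trans Finset.card_image_le
  have hnot : p.rep ∉ Submodule.span k (Projectivization.rep '' ((b : Set (ProjSpace k n)) \ {p})) :=
    hb.notMem_span (by simpa using hpb)
  obtain ⟨f, hf1, hf2, hf3⟩ := TL.exists_lin _ _ hnot
  have hq : ∀ q : ProjSpace k n, ∃ g : MvPolynomial (Fin (n+1)) k, g.IsHomogeneous 1 ∧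
      (q ≠ p → aeval p.rep g ≠ 0 ∧ aeval q.rep g = 0) := by
    intro q
    by_cases hqp : q = p
    · exact ⟨f, hf1, fun h => absurd hqp h⟩
    · have : p.rep ∉ Submodule.span k {q.rep} := by
        intro hmem
        obtain ⟨a, ha⟩ := Submodule.mem_span_singleton.1 hmem
        apply hqp
        rw [← q.mk_rep, ← p.mk_rep, eq_comm]
        exact (Projectivization.mk_eq_mk_iff' k _ _ p.rep_nonzero q.rep_nonzero).2 ⟨a, ha⟩
      obtain ⟨g, h1, h2, h3⟩ := TL.exists_lin _ _ this
      exact ⟨g, h1, fun _ => ⟨h2, h3 _ (Submodule.mem_span_singleton_self _)⟩⟩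
  choose g hg1 hg2 using hq
  have hbS' : b ⊆ S := by exact_mod_cast hbS
  have hpb' : p ∈ b := by simpa using hpb
  have hsd := Finset.card_sdiff_add_card_eq_card hbS'
  set r := (S \ b).card with hr
  set L := f * ∏ q ∈ S \ b, g q with hL
  have hLhom : L.IsHomogeneous (1 + r) := by
    refine hf1.mul ?_
    have := MvPolynomial.IsHomogeneous.prod (S \ b) g (fun _ => 1) (fun q _ => hg1 q)
    simpa using this
  have hLp : aeval p.rep L ≠ 0 := by
    rw [hL, map_mul, map_prod]
    refine mul_ne_zero hf2 (Finset.prod_ne_zero_iff.2 fun q hq => (hg2 q ?_).1)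
    rintro rfl
    exact (Finset.mem_sdiff.1 hq).2 hpb'
  have hLq : ∀ q ∈ S, q ≠ p → aeval q.rep L = 0 := by
    intro q hqS hqp
    rw [hL, map_mul, map_prod]
    by_cases hqb : q ∈ b
    · rw [hf3 _ (Submodule.subset_span ⟨q, ⟨hqb, hqp⟩, rfl⟩), zero_mul]
    · rw [Finset.prod_eq_zero (Finset.mem_sdiff.2 ⟨hqS, hqb⟩) (hg2 q hqp).2, mul_zero]
  refine ⟨L ^ 2 * f ^ (d - 1 - 2 * (1 + r)), ?_, ?_, ?_⟩
  · have := (hLhom.pow 2).mul (hf1.pow (d - 1 - 2 * (1 + r)))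
    convert this using 1
    omega
  · rw [map_mul, map_pow, map_pow]
    exact mul_ne_zero (pow_ne_zero _ hLp) (pow_ne_zero _ hf2)
  · intro q hqS hqp H
    rw [mul_assoc]
    exact TL.sq_mul_mem _ _ _ (hLq q hqS hqp)

theorem TL.h1_nonpos {k : Type*} [Field k] (n d : ℕ) (S : Finset (ProjSpace k n))
    (hS : Spans k n S) (hd : 2 ≤ d) (hx : S.card ≤ n + (d + 1) / 2 - 1) : h1 k n d S ≤ 0 := by
  classical
  have hG : ∀ p : S, _ := fun p => TL.exists_G n d S hS hd hx p.1 p.2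
  choose G hG1 hG2 hG3 using hG
  obtain ⟨hfin, hrank⟩ := TL.finrank_hom k n d
  set V := homogeneousSubmodule (Fin (n+1)) k d with hV
  set K := V ⊓ ⨅ p ∈ S, doubleVanishing k p.rep with hK
  have hKd : ∀ f ∈ K, ∀ p : S, f ∈ doubleVanishing k p.1.rep := by
    intro f hf p
    have := hf.2
    simp only [Submodule.mem_iInf, SetLike.mem_coe] at this
    exact this p.1 p.2
  let Φ : (S → (Fin (n+1) → k)) →ₗ[k] MvPolynomial (Fin (n+1)) k :=
    ∑ p : S, (LinearMap.mulLeft k (G p)).comp ((TL.lin k (n+1)).comp (LinearMap.proj p))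
  have hΦ : ∀ a, Φ a = ∑ p : S, G p * TL.lin k (n+1) (a p) := by
    intro a; simp [Φ]
  have hΦV : ∀ a, Φ a ∈ V := by
    intro a
    rw [hΦ]
    refine Submodule.sum_mem _ fun p _ => ?_
    have := (hG1 p).mul (TL.lin_hom (a p))
    rwa [Nat.sub_add_cancel (by omega)] at this
  have hΦK : ∀ a, Φ a ∈ K → a = 0 := by
    intro a ha
    funext p
    have h1 := hKd _ ha p
    rw [hΦ, ← Finset.add_sum_erase _ _ (Finset.mem_univ p)] at h1
    have h2 : ∑ q ∈ Finset.univ.erase p, G q * TL.lin k (n+1) (a q) ∈ doubleVanishing k p.1.rep := by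
      refine Submodule.sum_mem _ fun q hq => hG3 q p.1 p.2 ?_ _
      intro h
      exact (Finset.mem_erase.1 hq).1 (Subtype.ext h.symm)
    have h3 := (Submodule.add_mem_iff_left _ h2).1 h1
    rw [TL.mem_dv] at h3
    obtain ⟨h4, h5⟩ := h3
    rw [map_mul] at h4
    have h6 := (mul_eq_zero.1 h4).resolve_left (hG2 p)
    funext i
    have h7 := h5 i
    rw [Derivation.leibniz, TL.pderiv_lin] at h7
    simp only [smul_eq_mul, map_add, map_mul, h6, zero_mul, add_zero, algHom_C,
      Algebra.algebraMap_self_apply] at h7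
    exact (mul_eq_zero.1 h7).resolve_left (hG2 p)
  let Ψ : (K × (S → (Fin (n+1) → k))) →ₗ[k] V :=
    (K.subtype.coprod Φ).codRestrict V (by
      rintro ⟨f, a⟩
      simp only [LinearMap.coprod_apply]
      exact V.add_mem f.2.1 (hΦV a))
  have hΨ : Function.Injective Ψ := by
    rw [injective_iff_map_eq_zero]
    rintro ⟨f, a⟩ h
    have h' : (f : MvPolynomial (Fin (n+1)) k) + Φ a = 0 := congrArg Subtype.val h
    have ha : a = 0 := by
      apply hΦK
      rw [eq_neg_of_add_eq_zero_right h']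
      exact K.neg_mem f.2
    subst ha
    simp only [map_zero, add_zero] at h'
    ext1
    · exact Subtype.ext h'
    · rfl
  have hle := LinearMap.finrank_le_finrank_of_injective hΨ
  have : Module.Finite k K := Submodule.finiteDimensional_of_le (S₂ := V) inf_le_left
  rw [Module.finrank_prod, hrank, Module.finrank_pi_fintype] at hle
  simp only [Module.finrank_fin_fun, Finset.sum_const, Finset.card_univ, Fintype.card_coe,
    smul_eq_mul] at hle
  unfold h1 h0
  have hle' : ((Module.finrank k K : ℕ) : ℤ) + S.card * (n + 1) ≤ (n + d).choose n := by
    exact_mod_cast hle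
  linarith

/-- Proposition: for `n ≥ 2`, `d ≥ 2` and `x ≤ n + ⌈d/2⌉ - 1`, `T(n,d;x) = ∅`. -/
theorem terracini_empty_small_x
    (k : Type*) [Field k] [IsAlgClosed k] [CharZero k]
    (n d x : ℕ) (hn : 2 ≤ n) (hd : 2 ≤ d) (hx : x ≤ n + (d + 1) / 2 - 1) :
    Terracini k n d x = ∅ := by
  rw [Set.eq_empty_iff_forall_notMem]
  rintro S ⟨hcard, hS, -, h1⟩
  subst hcard
  exact absurd h1 (not_lt.2 (TL.h1_nonpos n d S hS hd hx))
end

section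
/- For every positive integer x, T(3,3;x)' = ∅; that is, there is no minimally Terracini finite set in P^3 with respect to O(3). -/
open MvPolynomial

section Helpers

variable {k : Type*} [Field k]

lemma mem_doubleVanishing_iff {n : ℕ} (v : Fin n → k) (F : MvPolynomial (Fin n) k) :
    F ∈ doubleVanishing k v ↔ eval v F = 0 ∧ ∀ i, eval v (pderiv i F) = 0 := by
  simp [doubleVanishing, evalLM, Submodule.mem_iInf, aeval_eq_eval]

/-- Linear substitution. -/
noncomputable def lsub (b : Fin 4 → Fin 4 → k) :
    MvPolynomial (Fin 4) k →ₐ[k] MvPolynomial (Fin 4) k :=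
  aeval (fun j => ∑ i, C (b i j) * X i)

lemma eval_lsub (b : Fin 4 → Fin 4 → k) (c : Fin 4 → k) (F : MvPolynomial (Fin 4) k) :
    eval c (lsub b F) = eval (∑ i, c i • b i) F := by
  induction F using MvPolynomial.induction_on with
  | C a => simp [lsub]
  | add p q hp hq => simp [hp, hq]
  | mul_X p j hp =>
    rw [map_mul, map_mul, hp, map_mul]
    simp [lsub, mul_comm]

lemma pderiv_lsub (b : Fin 4 → Fin 4 → k) (j : Fin 4) (F : MvPolynomial (Fin 4) k) :
    pderiv j (lsub b F) = ∑ l, C (b j l) * lsub b (pderiv l F) := by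
  induction F using MvPolynomial.induction_on with
  | C a => simp [lsub]
  | add p q hp hq => simp [hp, hq, mul_add, Finset.sum_add_distrib]
  | mul_X p i hp =>
    have hX : lsub b (X i) = ∑ l, C (b l i) * X l := by simp [lsub]
    have hd : pderiv j (lsub b (X i)) = C (b j i) := by
      rw [hX]
      simp [pderiv_X, Pi.single_apply]
    have hl : ∀ l, C (b j l) * lsub b (pderiv l (p * X i)) =
        (C (b j l) * lsub b (pderiv l p)) * lsub b (X i) +
          (if l = i then C (b j l) * lsub b p else 0) := by
      intro l
      rw [pderiv_mul, map_add, map_mul, map_mul]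
      by_cases hli : l = i
      · subst hli
        rw [pderiv_X_self, map_one, if_pos rfl]
        ring
      · rw [pderiv_X_of_ne (Ne.symm hli), map_zero, if_neg hli]
        ring
    rw [map_mul, pderiv_mul, hp, hd, Finset.sum_congr rfl fun l _ => hl l,
      Finset.sum_add_distrib, ← Finset.sum_mul, Finset.sum_ite_eq' Finset.univ i]
    simp [mul_comm]

lemma lsub_homog (b : Fin 4 → Fin 4 → k) {F : MvPolynomial (Fin 4) k} {d : ℕ}
    (hF : F.IsHomogeneous d) : (lsub b F).IsHomogeneous d := by
  have := hF.aeval (fun j => ∑ i, C (b i j) * X i : Fin 4 → MvPolynomial (Fin 4) k) (n := 1)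
    (fun j => IsHomogeneous.sum _ _ _ fun i _ => isHomogeneous_C_mul_X _ _)
  simpa [lsub] using this

lemma eval_pderiv_lsub (b : Fin 4 → Fin 4 → k) (c : Fin 4 → k) {F : MvPolynomial (Fin 4) k}
    (hF : F ∈ doubleVanishing k (∑ i, c i • b i)) (j : Fin 4) :
    eval c (pderiv j (lsub b F)) = 0 := by
  rw [mem_doubleVanishing_iff] at hF
  rw [pderiv_lsub, map_sum]
  refine Finset.sum_eq_zero fun l _ => ?_
  rw [map_mul, eval_lsub, hF.2 l, mul_zero]

lemma lsub_eq_zero [Infinite k] (b : Module.Basis (Fin 4) k (Fin 4 → k))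
    {F : MvPolynomial (Fin 4) k} (h : lsub b F = 0) : F = 0 := by
  apply MvPolynomial.funext
  intro v
  have := eval_lsub b (b.repr v) F
  rw [b.sum_repr, h] at this
  simpa using this.symm

lemma eval_single_homog {H : MvPolynomial (Fin 4) k} {d : ℕ} (hH : H.IsHomogeneous d)
    (i : Fin 4) : eval (Pi.single i 1) H = coeff (Finsupp.single i d) H := by
  rw [eval_eq']
  rw [Finset.sum_eq_single (Finsupp.single i d)]
  · rw [Finset.prod_eq_one, mul_one]
    intro j _
    by_cases hj : j = i
    · subst hj; simp
    · simp [Finsupp.single_apply, Ne.symm hj]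
  · intro m hm hne
    have hdeg : m.degree = d := by
      by_contra hc
      exact (mem_support_iff.1 hm) (hH.coeff_eq_zero hc)
    have : ∃ j, j ≠ i ∧ m j ≠ 0 := by
      by_contra hc
      push Not at hc
      apply hne
      have hm1 : m = Finsupp.single i (m i) := by
        ext j
        by_cases hj : j = i
        · subst hj; simp
        · simp [hc j hj, Finsupp.single_apply, Ne.symm hj]
      rw [hm1] at hdeg ⊢
      simp at hdeg
      simp [hdeg]
    obtain ⟨j, hj, hmj⟩ := this
    rw [Finset.prod_eq_zero (Finset.mem_univ j), mul_zero]
    simp [hj, hmj]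
  · intro h
    rw [notMem_support_iff.1 h, zero_mul]

/-- The squarefree exponent of degree three omitting `i`. -/
noncomputable def sqf (i : Fin 4) : Fin 4 →₀ ℕ :=
  Finsupp.equivFunOnFinite.symm (fun j => if j = i then 0 else 1)

lemma sqf_apply (i j : Fin 4) : sqf i j = if j = i then 0 else 1 := rfl

lemma sqf_inj {i j : Fin 4} : sqf i = sqf j ↔ i = j := by
  refine ⟨fun h => ?_, fun h => h ▸ rfl⟩
  have := DFunLike.congr_fun h i
  simp only [sqf_apply, if_true] at this
  by_contra hc
  simp [hc] at this

lemma exponent_cases (m : Fin 4 →₀ ℕ) (hm : m.degree = 3) :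
    (∃ i j, m = Finsupp.single i 2 + Finsupp.single j 1) ∨ ∃ i, m = sqf i := by
  have hs : m 0 + m 1 + m 2 + m 3 = 3 := by
    rw [Finsupp.degree_eq_sum, Fin.sum_univ_four] at hm
    exact hm
  by_cases h : ∃ i, 2 ≤ m i
  · left
    obtain ⟨i, hi⟩ := h
    have hle : Finsupp.single i 2 ≤ m := by simpa using hi
    obtain ⟨r, rfl⟩ := exists_add_of_le hle
    have : r.degree = 1 := by
      simp at hm
      omega
    have hr : r 0 + r 1 + r 2 + r 3 = 1 := by
      rw [Finsupp.degree_eq_sum, Fin.sum_univ_four] at this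
      exact this
    have : ∃ j, r j ≠ 0 := by
      by_contra hc
      push Not at hc
      simp [hc] at hr
    obtain ⟨j, hj⟩ := this
    refine ⟨i, j, ?_⟩
    congr 1
    ext l
    clear hle hi hs hm
    fin_cases j <;> fin_cases l <;> simp [Finsupp.single_apply] at * <;> omega
  · right
    push Not at h
    have h0 := h 0
    have h1 := h 1
    have h2 := h 2
    have h3 := h 3
    have : ∃ i, m i = 0 := by
      by_contra hc
      push Not at hc
      have := hc 0
      have := hc 1
      have := hc 2
      have := hc 3
      omega
    obtain ⟨i, hi⟩ := this
    refine ⟨i, ?_⟩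
    ext j
    rw [sqf_apply]
    fin_cases i <;> fin_cases j <;> simp at * <;> omega

lemma cubic_eq_zero [CharZero k] {G : MvPolynomial (Fin 4) k} (hG : G.IsHomogeneous 3)
    (h : ∀ i j, eval (Pi.single i 1) (pderiv j G) = 0) (hc : ∀ i, coeff (sqf i) G = 0) :
    G = 0 := by
  ext m
  rw [coeff_zero]
  by_cases hm : m.degree = 3
  · rcases exponent_cases m hm with ⟨i, j, rfl⟩ | ⟨i, rfl⟩
    · have := h i j
      rw [eval_single_homog hG.pderiv, coeff_pderiv] at this
      have hne : ((Finsupp.single i (3-1) : Fin 4 →₀ ℕ) j : k) + 1 ≠ 0 :=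
        Nat.cast_add_one_ne_zero _
      exact (mul_eq_zero.1 this).resolve_right hne
    · exact hc i
  · exact hG.coeff_eq_zero hm

lemma lin_aux [CharZero k] {c0 c1 c2 c3 a0 a1 a2 a3 : k} (h1 : a1 ≠ 0) (h2 : a2 ≠ 0)
    (h3 : a3 ≠ 0)
    (e0 : c1 * (a2 * a3) + c2 * (a1 * a3) + c3 * (a1 * a2) = 0)
    (e1 : c0 * (a2 * a3) + c2 * (a0 * a3) + c3 * (a0 * a2) = 0)
    (e2 : c0 * (a1 * a3) + c1 * (a0 * a3) + c3 * (a0 * a1) = 0)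
    (e3 : c0 * (a1 * a2) + c1 * (a0 * a2) + c2 * (a0 * a1) = 0) : c0 = 0 := by
  have h : c0 * (3 * (a1 * a2 * a3)) = 0 := by
    linear_combination (-2 * a0) * e0 + a1 * e1 + a2 * e2 + a3 * e3
  refine (mul_eq_zero.1 h).resolve_right ?_
  exact mul_ne_zero three_ne_zero (mul_ne_zero (mul_ne_zero h1 h2) h3)

lemma cubic_five [CharZero k] {G : MvPolynomial (Fin 4) k} (hG : G.IsHomogeneous 3)
    (h : ∀ i j, eval (Pi.single i 1) (pderiv j G) = 0) (a : Fin 4 → k) (ha : ∀ i, a i ≠ 0)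
    (h5 : ∀ j, eval a (pderiv j G) = 0) : G = 0 := by
  set H : MvPolynomial (Fin 4) k := ∑ i, monomial (sqf i) (coeff (sqf i) G) with hH
  have hHh : H.IsHomogeneous 3 := by
    refine IsHomogeneous.sum _ _ _ fun i _ => isHomogeneous_monomial _ ?_
    rw [Finsupp.degree_eq_sum, Fin.sum_univ_four]
    fin_cases i <;> simp [sqf_apply]
  have hGH : G = H := by
    rw [← sub_eq_zero]
    refine cubic_eq_zero (hG.sub hHh) (fun i j => ?_) (fun i => ?_)
    · rw [map_sub, map_sub, h, zero_sub, neg_eq_zero, hH, map_sum, map_sum]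
      refine Finset.sum_eq_zero fun l _ => ?_
      rw [pderiv_monomial, eval_monomial, Finsupp.prod_fintype _ _ (by simp), Fin.prod_univ_four]
      fin_cases i <;> fin_cases j <;> fin_cases l <;>
        simp [sqf_apply, Finsupp.single_apply]
    · rw [coeff_sub, hH, coeff_sum]
      simp [coeff_monomial, sqf_inj]
  refine cubic_eq_zero hG h ?_
  have key : ∀ j, eval a (pderiv j H) = 0 := fun j => hGH ▸ h5 j
  have key2 : ∀ j, ∑ i, eval a (pderiv j (monomial (sqf i) (coeff (sqf i) G))) = 0 := by
    intro j
    rw [← key j, hH, map_sum, map_sum]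
  clear_value H
  have a0 := ha 0
  have a1 := ha 1
  have a2 := ha 2
  have a3 := ha 3
  have e0 := key2 0
  have e1 := key2 1
  have e2 := key2 2
  have e3 := key2 3
  simp only [pderiv_monomial, eval_monomial, Fin.sum_univ_four,
    Finsupp.prod_fintype _ _ (fun _ => pow_zero _), Fin.prod_univ_four] at e0 e1 e2 e3
  simp [sqf_apply, Finsupp.single_apply] at e0 e1 e2 e3
  clear key key2 h5 h hHh hG hGH hH
  intro i
  fin_cases i
  · exact lin_aux a1 a2 a3 e0 e1 e2 e3
  · exact lin_aux (c0 := coeff (sqf 1) G) (c1 := coeff (sqf 0) G) (a1 := a 0) (a0 := a 1)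
      a0 a2 a3 e1 e0 (by linear_combination e2) (by linear_combination e3)
  · exact lin_aux (c0 := coeff (sqf 2) G) (c1 := coeff (sqf 0) G) (c2 := coeff (sqf 1) G)
      (a1 := a 0) (a2 := a 1) (a0 := a 2)
      a0 a1 a3 e2 (by linear_combination e0) (by linear_combination e1)
      (by linear_combination e3)
  · exact lin_aux (c0 := coeff (sqf 3) G) (c1 := coeff (sqf 0) G) (c2 := coeff (sqf 1) G)
      (c3 := coeff (sqf 2) G) (a1 := a 0) (a2 := a 1) (a3 := a 2) (a0 := a 3)
      a0 a1 a2 e3 (by linear_combination e0) (by linear_combination e1)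
      (by linear_combination e2)

lemma finrank_quadrics : Module.finrank k (homogeneousSubmodule (Fin 4) k 2) = 10 := by
  have h : homogeneousSubmodule (Fin 4) k 2 =
      restrictSupport k {d : Fin 4 →₀ ℕ | d.degree = 2} :=
    homogeneousSubmodule_eq_finsupp_supported _ _ _
  rw [h, Module.finrank_eq_nat_card_basis (basisRestrictSupport k _)]
  have hs : {d : Fin 4 →₀ ℕ | d.degree = 2} =
      ((Finset.univ.finsuppAntidiag 2 : Finset (Fin 4 →₀ ℕ)) : Set (Fin 4 →₀ ℕ)) := by
    ext d
    simp [Finsupp.degree_eq_sum]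
  rw [hs, Nat.card_coe_set_eq, Set.ncard_coe_finset, Finset.card_finsuppAntidiag_nat_eq_choose]
  simp
  decide

/-- The space of forms singular along `S`. -/
noncomputable abbrev singSpace (S : Finset (ProjSpace k 3)) : Submodule k (MvPolynomial (Fin 4) k) :=
  homogeneousSubmodule (Fin (3+1)) k 3 ⊓ ⨅ p ∈ S, doubleVanishing k p.rep

lemma mem_singSpace {S : Finset (ProjSpace k 3)} {F : MvPolynomial (Fin 4) k} :
    F ∈ singSpace S ↔ F.IsHomogeneous 3 ∧ ∀ p ∈ S, F ∈ doubleVanishing k p.rep := by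
  simp [singSpace, Submodule.mem_iInf]

instance singSpace_finite (S : Finset (ProjSpace k 3)) : Module.Finite k (singSpace S) := by
  haveI : Module.Finite k (homogeneousSubmodule (Fin (3+1)) k 3) :=
    Module.Finite.iff_fg.2 (homogeneousSubmodule_fg _ _ _)
  exact Submodule.finiteDimensional_of_le (inf_le_left)

lemma h0_mono {A S : Finset (ProjSpace k 3)} (h : A ⊆ S) : h0 k 3 3 S ≤ h0 k 3 3 A := by
  refine Submodule.finrank_mono (s := singSpace S) (t := singSpace A) ?_
  intro F hF
  rw [mem_singSpace] at hF ⊢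
  exact ⟨hF.1, fun p hp => hF.2 p (h hp)⟩

lemma plane_h1 {A : Finset (ProjSpace k 3)} (hA : A.card = 4) (φ : (Fin 4 → k) →ₗ[k] k)
    (hφ : φ ≠ 0) (hv : ∀ p ∈ A, φ p.rep = 0) : 0 < h1 k 3 3 A := by
  set L : MvPolynomial (Fin 4) k := ∑ i, C (φ (Pi.single i 1)) * X i with hL
  have hLe : ∀ v, eval v L = φ v := by
    intro v
    conv_rhs => rw [← Finset.univ_sum_single v]
    rw [hL, map_sum, map_sum]
    refine Finset.sum_congr rfl fun i _ => ?_
    have : (Pi.single i (v i) : Fin 4 → k) = v i • Pi.single i 1 := by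
      rw [← Pi.single_smul]; simp
    simp [this, mul_comm]
  have hL0 : L ≠ 0 := by
    intro h
    apply hφ
    refine LinearMap.ext fun v => ?_
    rw [LinearMap.zero_apply, ← hLe, h, map_zero]
  have hLh : L.IsHomogeneous 1 := IsHomogeneous.sum _ _ _ fun i _ => isHomogeneous_C_mul_X _ _
  let W := homogeneousSubmodule (Fin 4) k 2
  haveI : Module.Finite k W := Module.Finite.iff_fg.2 (homogeneousSubmodule_fg _ _ _)
  let T : W →ₗ[k] (A → k) := LinearMap.pi fun p => (evalLM k p.1.rep) ∘ₗ W.subtype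
  have hrank := T.finrank_range_add_finrank_ker
  rw [show Module.finrank k W = 10 from finrank_quadrics] at hrank
  have hr : Module.finrank k (LinearMap.range T) ≤ 4 := by
    refine (Submodule.finrank_le _).trans ?_
    simp [hA]
  let f : LinearMap.ker T →ₗ[k] singSpace A :=
    LinearMap.codRestrict (singSpace A)
      ((LinearMap.mulLeft k L) ∘ₗ W.subtype ∘ₗ (LinearMap.ker T).subtype) (by
        rintro ⟨⟨Q, hQ⟩, hT⟩
        rw [mem_singSpace]
        refine ⟨?_, fun p hp => ?_⟩
        · exact hLh.mul hQ
        · have hQ0 : eval p.rep Q = 0 := by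
            have := congrFun (LinearMap.mem_ker.1 hT) ⟨p, hp⟩
            simpa [T, evalLM, aeval_eq_eval] using this
          have hLp : eval p.rep L = 0 := by rw [hLe, hv p hp]
          rw [mem_doubleVanishing_iff]
          refine ⟨?_, fun i => ?_⟩
          · simp [hLp]
          · simp only [LinearMap.comp_apply, Submodule.subtype_apply, LinearMap.mulLeft_apply]
            rw [pderiv_mul, map_add, map_mul, map_mul, hQ0, hLp]
            ring)
  have hf : Function.Injective f := by
    intro x y hxy
    have := congrArg Subtype.val hxy
    have h2 : L * (x : W).1 = L * (y : W).1 := this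
    exact Subtype.ext (Subtype.ext (mul_left_cancel₀ hL0 h2))
  have hle : Module.finrank k (LinearMap.ker T) ≤ Module.finrank k (singSpace A) :=
    LinearMap.finrank_le_finrank_of_injective hf
  change _ ≤ h0 k 3 3 A at hle
  have hch : (3 + 3).choose 3 = 20 := by decide
  rw [h1, hA, hch]
  push_cast
  omega

lemma exists_basis {A : Finset (ProjSpace k 3)} (hA : A.card = 4) (hs : Spans k 3 A) :
    ∃ (b : Module.Basis (Fin 4) k (Fin 4 → k)) (e : Fin 4 ≃ A), ∀ i, b i = (e i).1.rep := by
  let e : Fin 4 ≃ A := (A.equivFinOfCardEq hA).symm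
  have hr : Set.range (fun i => (e i).1.rep) =
      Projectivization.rep '' (A : Set (ProjSpace k 3)) := by
    ext v
    constructor
    · rintro ⟨i, rfl⟩
      exact ⟨_, (e i).2, rfl⟩
    · rintro ⟨p, hp, rfl⟩
      exact ⟨e.symm ⟨p, hp⟩, by simp⟩
  have hle : ⊤ ≤ Submodule.span k (Set.range (fun i => (e i).1.rep)) := by
    rw [hr]
    exact hs.ge
  refine ⟨basisOfTopLeSpanOfCardEqFinrank (fun i => (e i).1.rep) hle (by simp), e, fun i => ?_⟩
  rw [coe_basisOfTopLeSpanOfCardEqFinrank]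

lemma sum_single_smul (b : Fin 4 → Fin 4 → k) (i : Fin 4) :
    ∑ l, (Pi.single i (1 : k) : Fin 4 → k) l • b l = b i := by
  rw [Finset.sum_eq_single i]
  · simp
  · intro l _ hl
    simp [hl]
  · simp

lemma four_h0 [CharZero k] {A : Finset (ProjSpace k 3)} (hA : A.card = 4)
    (hs : Spans k 3 A) : h0 k 3 3 A ≤ 4 := by
  obtain ⟨b, e, hb⟩ := exists_basis hA hs
  let f : singSpace A →ₗ[k] (Fin 4 → k) :=
    (LinearMap.pi fun i => lcoeff k (sqf i)) ∘ₗ (lsub b).toLinearMap ∘ₗ (singSpace A).subtype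
  have hf : Function.Injective f := by
    rw [injective_iff_map_eq_zero]
    rintro ⟨F, hF⟩ h
    rw [mem_singSpace] at hF
    apply Subtype.ext
    refine lsub_eq_zero b (cubic_eq_zero (lsub_homog b hF.1) (fun i j => ?_) fun i => ?_)
    · apply eval_pderiv_lsub
      rw [sum_single_smul, hb]
      exact hF.2 _ (e i).2
    · exact congrFun h i
  have := LinearMap.finrank_le_finrank_of_injective hf
  rw [Module.finrank_fin_fun] at this
  exact this

lemma five_h0 [CharZero k] {A : Finset (ProjSpace k 3)} (b : Module.Basis (Fin 4) k (Fin 4 → k))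
    (hb : ∀ i, ∃ p ∈ A, b i = p.rep) (p : ProjSpace k 3) (hp : p ∈ A)
    (ha : ∀ i, b.repr p.rep i ≠ 0) : h0 k 3 3 A = 0 := by
  have : singSpace A = ⊥ := by
    rw [eq_bot_iff]
    intro F hF
    rw [mem_singSpace] at hF
    rw [Submodule.mem_bot]
    refine lsub_eq_zero b (cubic_five (lsub_homog b hF.1) (fun i j => ?_) (b.repr p.rep) ha
      fun j => ?_)
    · apply eval_pderiv_lsub
      obtain ⟨q, hq, hbq⟩ := hb i
      rw [sum_single_smul, hbq]
      exact hF.2 _ hq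
    · apply eval_pderiv_lsub
      rw [b.sum_repr]
      exact hF.2 _ hp
  change Module.finrank k (singSpace A) = 0
  rw [this]
  simp

end Helpers

/-- Lemma: there is no minimally Terracini finite set in `P^3` with respect to `O(3)`. -/
theorem minTerracini_three_three_empty
    (k : Type*) [Field k] [IsAlgClosed k] [CharZero k]
    (x : ℕ) (hx : 0 < x) :
    minTerracini k 3 3 x = ∅ := by
  classical
  rw [Set.eq_empty_iff_forall_notMem]
  rintro S ⟨⟨-, hs, h0pos, h1pos⟩, hmin⟩
  have hch : (3 + 3).choose 3 = 20 := by decide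
  have hlt : 4 ≤ S.card := by
    have h := finrank_span_finset_le_card (R := k) (S.image Projectivization.rep)
    rw [Finset.coe_image, Set.finrank, hs, finrank_top] at h
    simp only [Module.finrank_fin_fun] at h
    exact h.trans Finset.card_image_le
  rcases Nat.lt_or_ge 5 S.card with h6 | h5
  · obtain ⟨A, hAS, hA⟩ := Finset.exists_subset_card_eq h6.le
    have hss : A ⊂ S := by
      refine hAS.ssubset_of_ne ?_
      rintro rfl
      omega
    have := hmin A hss
    rw [h1, hA, hch] at this
    have hle := h0_mono hAS
    push_cast at this
    omega
  · rcases (by omega : S.card = 4 ∨ S.card = 5) with h4 | h5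
    · have := four_h0 h4 hs
      rw [h1, h4, hch] at h1pos
      push_cast at h1pos
      omega
    · have hpl : ∀ p ∈ S, ∀ φ : (Fin 4 → k) →ₗ[k] k, (∀ q ∈ S, q ≠ p → φ q.rep = 0) → φ = 0 := by
        intro p hp φ hφ
        by_contra hne
        have := plane_h1 (A := S.erase p) (by rw [Finset.card_erase_of_mem hp, h5]) φ hne
          (fun q hq => hφ q (Finset.mem_of_mem_erase hq) (Finset.ne_of_mem_erase hq))
        rw [hmin _ (Finset.erase_ssubset hp)] at this
        exact lt_irrefl _ this
      obtain ⟨p, hp⟩ : S.Nonempty := Finset.card_pos.1 (by omega)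
      have hsp : Spans k 3 (S.erase p) := by
        by_contra hc
        obtain ⟨φ, hφ, hk⟩ := Submodule.exists_le_ker_of_lt_top _ (lt_top_iff_ne_top.2 hc)
        refine hφ (hpl p hp φ fun q hq hqp => ?_)
        exact hk (Submodule.subset_span ⟨q, by simp [hq, hqp], rfl⟩)
      obtain ⟨b, e, hb⟩ := exists_basis (by rw [Finset.card_erase_of_mem hp, h5]) hsp
      have hz : h0 k 3 3 S = 0 := by
        refine five_h0 b (fun i => ⟨(e i).1, Finset.mem_of_mem_erase (e i).2, hb i⟩) p hp ?_
        intro i hi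
        have hi0 : b.coord i = 0 := by
          refine hpl (e i).1 (Finset.mem_of_mem_erase (e i).2) _ fun q hq hqe => ?_
          by_cases hqp : q = p
          · subst hqp
            exact hi
          · have hqm : q ∈ S.erase p := Finset.mem_erase.2 ⟨hqp, hq⟩
            have hbq : b (e.symm ⟨q, hqm⟩) = q.rep := by simp [hb]
            rw [← hbq, Module.Basis.coord_apply, Module.Basis.repr_self,
              Finsupp.single_apply, if_neg]
            intro h
            apply hqe
            rw [← h]
            simp
        have := LinearMap.congr_fun hi0 (b i)
        simp at this
      omega
end

section
/- Let S ∈ T(n,d;x)' be a minimally Terracini set. Then h^1(I_{2S}(d)) ≤ n+1. -/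
open MvPolynomial

theorem finite_homogeneousSubmodule (k : Type*) [Field k] (n d : ℕ) :
    Module.Finite k (homogeneousSubmodule (Fin n) k d) :=
  Module.Finite.iff_fg.2 (homogeneousSubmodule_fg _ _ d)

/-- Remark: if `S ∈ T(n,d;x)'` then `h^1(I_{2S}(d)) ≤ n+1`. -/
theorem minTerracini_h1_le
    (k : Type*) [Field k] [IsAlgClosed k] [CharZero k]
    (n d x : ℕ) (S : Finset (ProjSpace k n)) (hS : S ∈ minTerracini k n d x) :
    h1 k n d S ≤ (n : ℤ) + 1 := by
  classical
  obtain ⟨⟨-, hsp, -, -⟩, hmin⟩ := hS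
  have hne : S.Nonempty := by
    by_contra h
    rw [Finset.not_nonempty_iff_eq_empty] at h
    subst h
    simp [Spans] at hsp
  obtain ⟨p, hp⟩ := hne
  have hA := hmin _ (Finset.erase_ssubset hp)
  have hcard := Finset.card_erase_add_one hp
  have hle : h0 k n d S ≤ h0 k n d (S.erase p) := by
    have := finite_homogeneousSubmodule k (n+1) d
    unfold h0
    have : Module.Finite k ↥(homogeneousSubmodule (Fin (n+1)) k d ⊓
        ⨅ q ∈ S.erase p, doubleVanishing k q.rep) :=
      Submodule.finiteDimensional_of_le inf_le_left
    refine Submodule.finrank_mono (inf_le_inf_left _ ?_)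
    exact biInf_mono fun q hq => Finset.mem_of_mem_erase hq
  unfold h1 at hA ⊢
  rw [← hcard]
  push_cast
  have : (h0 k n d S : ℤ) ≤ h0 k n d (S.erase p) := by exact_mod_cast hle
  linarith
end

section
/- Let C ⊂ P^n be a rational normal curve and S ⊂ C a set of x points on C. Then: (i) if n ≥ 3, d ≥ 4 and x ≥ 1 + ⌈nd/2⌉, then S ∈ T(n,d;x); (ii) if n ≥ 4, d = 3 and x = 1 + ⌈3n/2⌉, then S ∈ T(n,3;x); (iii) if n ≥ 2, d ≥ 4 and x = 1 + ⌈nd/2⌉, then S ∈ T(n,d;x)'. -/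
open MvPolynomial

/-- The `i`-th coordinate `s^(n-i) t^i` of the standard rational normal curve of degree `n`. -/
def stdRNCvec (k : Type*) [Field k] (n : ℕ) (s t : k) : Fin (n+1) → k :=
  fun i => s ^ (n - (i : ℕ)) * t ^ (i : ℕ)

/-- The standard rational normal curve in `P^n`: the image of
`[s:t] ↦ [s^n : s^(n-1)t : ⋯ : t^n]`. -/
def stdRNC (k : Type*) [Field k] (n : ℕ) : Set (ProjSpace k n) :=
  {p | ∃ s t : k, (s ≠ 0 ∨ t ≠ 0) ∧
    Projectivization.submodule p = Submodule.span k {stdRNCvec k n s t}}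

/-- A rational normal curve in `P^n`: a curve projectively equivalent to the standard one. -/
def IsRNC (k : Type*) [Field k] (n : ℕ) (C : Set (ProjSpace k n)) : Prop :=
  ∃ g : (Fin (n+1) → k) ≃ₗ[k] (Fin (n+1) → k),
    C = {p | ∃ s t : k, (s ≠ 0 ∨ t ≠ 0) ∧
      Projectivization.submodule p = Submodule.span k {g (stdRNCvec k n s t)}}

namespace RNCT

theorem finrank_hom (k : Type*) [Field k] (n d : ℕ) :
    Module.finrank k (homogeneousSubmodule (Fin (n+1)) k d) = (n+d).choose n := by
  rw [homogeneousSubmodule_eq_finsupp_supported]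
  refine (Module.finrank_eq_nat_card_basis
    (basisRestrictSupport k {e : Fin (n+1) →₀ ℕ | e.degree = d})).trans ?_
  have h : {e : Fin (n+1) →₀ ℕ | e.degree = d} =
      ((Finset.univ : Finset (Fin (n+1))).finsuppAntidiag d : Set (Fin (n+1) →₀ ℕ)) := by
    ext e
    simp [Finset.mem_finsuppAntidiag, Finsupp.degree_eq_sum]
  rw [h]
  simp only [Finset.coe_sort_coe, Nat.card_eq_fintype_card, Fintype.card_coe]
  rw [Finset.card_finsuppAntidiag_nat_eq_choose]
  simp only [Finset.card_univ, Fintype.card_fin]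
  rw [show n + 1 + d - 1 = n + d by omega, Nat.choose_symm_add]

instance finite_hom (k : Type*) [Field k] (m d : ℕ) :
    Module.Finite k (homogeneousSubmodule (Fin m) k d) :=
  Module.Finite.iff_fg.mpr (homogeneousSubmodule_fg (Fin m) k d)

/-- Gradients at all points of `S`. -/
noncomputable def gradMap {k : Type*} [Field k] {n : ℕ} (d : ℕ) (S : Finset (ProjSpace k n)) :
    homogeneousSubmodule (Fin (n+1)) k d →ₗ[k] (S → Fin (n+1) → k) :=
  LinearMap.pi fun p => LinearMap.pi fun i =>
    ((evalLM k p.1.rep).comp (MvPolynomial.pderiv i).toLinearMap).comp (Submodule.subtype _)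

theorem gradMap_apply {k : Type*} [Field k] {n : ℕ} (d : ℕ) (S : Finset (ProjSpace k n))
    (f : homogeneousSubmodule (Fin (n+1)) k d) (p : S) (i : Fin (n+1)) :
    gradMap d S f p i = eval p.1.rep (pderiv i f.1) := by
  simp [gradMap, evalLM, aeval_eq_eval]

theorem mem_doubleVanishing {k : Type*} [Field k] {n : ℕ} (v : Fin n → k)
    (f : MvPolynomial (Fin n) k) :
    f ∈ doubleVanishing k v ↔ eval v f = 0 ∧ ∀ i, eval v (pderiv i f) = 0 := by
  simp [doubleVanishing, evalLM, aeval_eq_eval, Submodule.mem_iInf]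

theorem euler_eval {k : Type*} [Field k] {n d : ℕ} (v : Fin n → k)
    (f : MvPolynomial (Fin n) k) (hf : f.IsHomogeneous d) :
    ∑ i, v i * eval v (pderiv i f) = d * eval v f := by
  have := congrArg (eval v) hf.sum_X_mul_pderiv
  simpa using this

theorem h0_eq {k : Type*} [Field k] [CharZero k] {n d : ℕ} (hd : d ≠ 0)
    (S : Finset (ProjSpace k n)) :
    h0 k n d S = Module.finrank k (LinearMap.ker (gradMap d S)) := by
  rw [h0, ← Submodule.finrank_map_subtype_eq]
  have : homogeneousSubmodule (Fin (n+1)) k d ⊓ ⨅ p ∈ S, doubleVanishing k p.rep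
    = Submodule.map (homogeneousSubmodule (Fin (n+1)) k d).subtype (LinearMap.ker (gradMap d S)) := by
    ext f
    simp only [Submodule.mem_inf, Submodule.mem_iInf, mem_doubleVanishing, Submodule.mem_map,
      LinearMap.mem_ker]
    constructor
    · rintro ⟨hf, h⟩
      refine ⟨⟨f, hf⟩, ?_, rfl⟩
      ext p i
      rw [gradMap_apply]
      exact (h p.1 p.2).2 i
    · rintro ⟨f, hf, rfl⟩
      refine ⟨f.2, fun p hp => ?_⟩
      have h2 : ∀ i, eval p.rep (pderiv i f.1) = 0 := fun i => by
        rw [← gradMap_apply d S f ⟨p, hp⟩ i, hf]; rfl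
      refine ⟨?_, h2⟩
      have := euler_eval p.rep f.1 f.2
      simp only [h2, mul_zero, Finset.sum_const_zero] at this
      simpa [hd] using this.symm
  rw [this]

theorem h1_eq {k : Type*} [Field k] [CharZero k] {n d : ℕ} (hd : d ≠ 0)
    (S : Finset (ProjSpace k n)) :
    h1 k n d S + Module.finrank k (LinearMap.range (gradMap d S)) =
      Module.finrank k (S → Fin (n+1) → k) := by
  have h := LinearMap.finrank_range_add_finrank_ker (gradMap d S)
  rw [← h0_eq hd, finrank_hom] at h
  rw [h1, ← h]
  simp only [Module.finrank_pi_fintype, Module.finrank_self, Fintype.card_fin,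
    Finset.sum_const, Finset.card_univ, Fintype.card_coe, smul_eq_mul]
  push_cast
  ring

theorem h1_eq_zero {k : Type*} [Field k] [CharZero k] {n d : ℕ} (hd : d ≠ 0)
    (S : Finset (ProjSpace k n)) (h : Function.Surjective (gradMap d S)) : h1 k n d S = 0 := by
  have := h1_eq hd S
  rw [LinearMap.range_eq_top.mpr h, finrank_top] at this
  omega

theorem h1_pos {k : Type*} [Field k] [CharZero k] {n d : ℕ} (hd : d ≠ 0)
    (S : Finset (ProjSpace k n)) (h : ¬ Function.Surjective (gradMap d S)) : 0 < h1 k n d S := by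
  have := h1_eq hd S
  rw [← LinearMap.range_eq_top] at h
  have := Submodule.finrank_lt h
  omega

theorem h0_pos {k : Type*} [Field k] {n d : ℕ} 
    (S : Finset (ProjSpace k n)) (f : MvPolynomial (Fin (n+1)) k) (hf : f.IsHomogeneous d)
    (hf0 : f ≠ 0) (h : ∀ p ∈ S, f ∈ doubleVanishing k p.rep) : 0 < h0 k n d S := by
  rw [h0]
  have : Module.Finite k ↥(homogeneousSubmodule (Fin (n+1)) k d ⊓ ⨅ p ∈ S, doubleVanishing k p.rep) :=
    Submodule.finiteDimensional_inf_left _ _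
  rw [Module.finrank_pos_iff_exists_ne_zero]
  refine ⟨⟨f, ⟨hf, ?_⟩⟩, ?_⟩
  · simpa [Submodule.mem_iInf] using h
  · intro h
    exact hf0 (congrArg Subtype.val h)

theorem surj_mono {k : Type*} [Field k] {n d : ℕ} {A B : Finset (ProjSpace k n)} (hAB : A ⊆ B)
    (h : Function.Surjective (gradMap d B)) : Function.Surjective (gradMap d A) := by
  classical
  intro w
  obtain ⟨f, hf⟩ := h (fun p => if hp : p.1 ∈ A then w ⟨p.1, hp⟩ else 0)
  refine ⟨f, ?_⟩
  ext p i
  rw [gradMap_apply, ← gradMap_apply d B f ⟨p.1, hAB p.2⟩ i, hf]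
  simp

theorem distribute {α : Type*} [DecidableEq α] (Q1 Q2 : Finset α) (n m : ℕ) (hm : 2 ≤ m)
    (h : 2 * Q2.card + Q1.card ≤ n * m) :
    ∃ T : Fin m → Finset α, (∀ j, (T j).card ≤ n) ∧ (∀ j, T j ⊆ Q1 ∪ Q2) ∧
      (∀ q ∈ Q1, ∃ j, q ∈ T j) ∧ (∀ q ∈ Q2, ∃ i j, i ≠ j ∧ q ∈ T i ∧ q ∈ T j) := by
  by_cases hne : Q1 ∪ Q2 = ∅
  · rw [Finset.union_eq_empty] at hne
    refine ⟨fun _ => ∅, ?_⟩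
    simp [hne.1, hne.2]
  obtain ⟨a0, ha0⟩ := Finset.nonempty_iff_ne_empty.mpr hne
  let e1 := Q1.equivFin
  let e2 := Q2.equivFin
  let dec : ℕ → α := fun i => if h : i / 2 < Q2.card then (e2.symm ⟨i/2, h⟩).1 else
    if h : i - 2 * Q2.card < Q1.card then (e1.symm ⟨i - 2 * Q2.card, h⟩).1 else a0
  let N := 2 * Q2.card + Q1.card
  have hm0 : 0 < m := by omega
  refine ⟨fun j => ((Finset.range N).filter (· ≡ j.1 [MOD m])).image dec, ?_, ?_, ?_, ?_⟩
  · intro j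
    refine Finset.card_image_le.trans ?_
    rw [← Nat.count_eq_card_filter_range]
    refine (Nat.count_monotone _ h).trans ?_
    rw [Nat.count_modEq_card _ hm0]
    simp [hm0]
  · intro j a ha
    simp only [Finset.mem_image] at ha
    obtain ⟨i, -, rfl⟩ := ha
    simp only [dec]
    split_ifs
    · exact Finset.mem_union_right _ (e2.symm _).2
    · exact Finset.mem_union_left _ (e1.symm _).2
    · exact ha0
  · intro q hq
    have hlt := (e1 ⟨q, hq⟩).2
    refine ⟨⟨(2 * Q2.card + (e1 ⟨q, hq⟩).1) % m, Nat.mod_lt _ hm0⟩, ?_⟩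
    simp only [Finset.mem_image, Finset.mem_filter, Finset.mem_range]
    refine ⟨2 * Q2.card + (e1 ⟨q, hq⟩).1, ⟨by omega, (Nat.mod_modEq _ _).symm⟩, ?_⟩
    simp only [dec]
    rw [dif_neg (by omega), dif_pos (by omega)]
    simp
  · intro q hq
    have hlt := (e2 ⟨q, hq⟩).2
    refine ⟨⟨(2 * (e2 ⟨q, hq⟩).1) % m, Nat.mod_lt _ hm0⟩,
      ⟨(2 * (e2 ⟨q, hq⟩).1 + 1) % m, Nat.mod_lt _ hm0⟩, ?_, ?_, ?_⟩
    · intro hh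
      simp only [Fin.mk.injEq] at hh
      have h2 : (2 * (e2 ⟨q, hq⟩).1 + 1) ≡ (2 * (e2 ⟨q, hq⟩).1 + 0) [MOD m] := hh.symm
      have h3 := Nat.ModEq.add_left_cancel' _ h2
      have h4 := (Nat.modEq_zero_iff_dvd.mp h3)
      have := Nat.le_of_dvd one_pos h4
      omega
    · simp only [Finset.mem_image, Finset.mem_filter, Finset.mem_range]
      refine ⟨2 * (e2 ⟨q, hq⟩).1, ⟨by omega, (Nat.mod_modEq _ _).symm⟩, ?_⟩
      simp only [dec]
      rw [dif_pos (by omega)]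
      simp
    · simp only [Finset.mem_image, Finset.mem_filter, Finset.mem_range]
      refine ⟨2 * (e2 ⟨q, hq⟩).1 + 1, ⟨by omega, (Nat.mod_modEq _ _).symm⟩, ?_⟩
      simp only [dec]
      rw [dif_pos (by omega)]
      have : (2 * (e2 ⟨q, hq⟩).1 + 1) / 2 = (e2 ⟨q, hq⟩).1 := by omega
      simp [this]

/-- The linear polynomial attached to a linear functional. -/
noncomputable def lin {k : Type*} [Field k] {m : ℕ} (φ : (Fin m → k) →ₗ[k] k) :
    MvPolynomial (Fin m) k := ∑ i, C (φ (Pi.single i 1)) * X i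

theorem eval_lin {k : Type*} [Field k] {m : ℕ} (φ : (Fin m → k) →ₗ[k] k) (v : Fin m → k) :
    eval v (lin φ) = φ v := by
  conv_rhs => rw [pi_eq_sum_univ' v]
  simp [lin, mul_comm]

theorem pderiv_lin {k : Type*} [Field k] {m : ℕ} (φ : (Fin m → k) →ₗ[k] k) (i : Fin m) :
    pderiv i (lin φ) = C (φ (Pi.single i 1)) := by
  simp [lin, pderiv_X, Pi.single_apply]

theorem lin_hom {k : Type*} [Field k] {m : ℕ} (φ : (Fin m → k) →ₗ[k] k) :
    (lin φ).IsHomogeneous 1 := by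
  apply IsHomogeneous.sum
  intro i _
  simpa using (isHomogeneous_C (Fin m) (φ (Pi.single i 1))).mul (isHomogeneous_X k i)

theorem dv_mul {k : Type*} [Field k] {m : ℕ} (v : Fin m → k) (u w : MvPolynomial (Fin m) k)
    (hu : eval v u = 0) (hw : eval v w = 0) : u * w ∈ doubleVanishing k v := by
  rw [mem_doubleVanishing]
  refine ⟨by simp [hu], fun i => ?_⟩
  simp [pderiv_mul, hu, hw]

theorem dv_mul_right {k : Type*} [Field k] {m : ℕ} (v : Fin m → k) (u w : MvPolynomial (Fin m) k)
    (hu : w ∈ doubleVanishing k v) : u * w ∈ doubleVanishing k v := by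
  rw [mem_doubleVanishing] at *
  refine ⟨by simp [hu.1], fun i => ?_⟩
  simp [pderiv_mul, hu.1, hu.2]

theorem dv_prod {k : Type*} [Field k] {m r : ℕ} (v : Fin m → k)
    (u : Fin r → MvPolynomial (Fin m) k) (i j : Fin r) (hij : i ≠ j)
    (hi : eval v (u i) = 0) (hj : eval v (u j) = 0) : ∏ l, u l ∈ doubleVanishing k v := by
  rw [← Finset.mul_prod_erase _ _ (Finset.mem_univ i)]
  apply dv_mul _ _ _ hi
  rw [map_prod]
  exact Finset.prod_eq_zero (Finset.mem_erase.mpr ⟨hij.symm, Finset.mem_univ j⟩) hj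

/-- Separation: linearly general position. -/
def Sep {k : Type*} [Field k] {n : ℕ} (S : Finset (ProjSpace k n)) : Prop :=
  ∀ T ⊆ S, ∀ p ∈ S, p ∉ T → T.card ≤ n → ∃ φ : (Fin (n+1) → k) →ₗ[k] k,
    (∀ q ∈ T, φ q.rep = 0) ∧ φ p.rep ≠ 0

theorem Sep.mono {k : Type*} [Field k] {n : ℕ} {A B : Finset (ProjSpace k n)} (h : Sep B)
    (hAB : A ⊆ B) : Sep A := fun T hT p hp => h T (hT.trans hAB) p (hAB hp)

theorem Sep.span_eq {k : Type*} [Field k] {n : ℕ} {S : Finset (ProjSpace k n)} (h : Sep S)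
    (hc : S.card = n + 1) : Spans k n S := by
  classical
  have hli : LinearIndependent k (fun p : S => p.1.rep) := by
    rw [Fintype.linearIndependent_iff]
    intro c hc0 p
    obtain ⟨φ, h1, h2⟩ := h (S.erase p.1) (Finset.erase_subset _ _) p.1 p.2
      (Finset.notMem_erase _ _) (by rw [Finset.card_erase_of_mem p.2]; omega)
    have := congrArg φ hc0
    rw [map_sum, map_zero, Finset.sum_eq_single p] at this
    · simpa [h2] using this
    · intro q _ hqp
      rw [map_smul, h1 q.1 (Finset.mem_erase.mpr ⟨fun hh => hqp (Subtype.ext hh), q.2⟩), smul_zero]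
    · simp
  have hs := hli.span_eq_top_of_card_eq_finrank' (by simp [hc])
  rw [Spans, ← hs]
  congr 1
  ext v
  simp

theorem Sep.spans {k : Type*} [Field k] {n : ℕ} {S : Finset (ProjSpace k n)} (h : Sep S)
    (hc : n + 1 ≤ S.card) : Spans k n S := by
  obtain ⟨A, hA, hAc⟩ := Finset.exists_subset_card_eq hc
  have := (h.mono hA).span_eq hAc
  rw [Spans] at *
  rw [eq_top_iff, ← this]
  exact Submodule.span_mono (Set.image_mono (by exact_mod_cast hA))

/-- products of hyperplanes -/
theorem exists_prod {k : Type*} [Field k] {n : ℕ} {B : Finset (ProjSpace k n)} (h : Sep B)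
    [DecidableEq (ProjSpace k n)]
    (p : ProjSpace k n) (hp : p ∈ B) (Q1 Q2 : Finset (ProjSpace k n)) (hQ1 : Q1 ⊆ B.erase p)
    (hQ2 : Q2 ⊆ B.erase p) (m : ℕ) (hm : 2 ≤ m) (hc : 2 * Q2.card + Q1.card ≤ n * m) :
    ∃ f : MvPolynomial (Fin (n+1)) k, f.IsHomogeneous m ∧ eval p.rep f ≠ 0 ∧
      (∀ q ∈ Q1, eval q.rep f = 0) ∧ (∀ q ∈ Q2, f ∈ doubleVanishing k q.rep) := by
  obtain ⟨T, hT1, hT2, hT3, hT4⟩ := distribute Q1 Q2 n m hm hc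
  have hT2' : ∀ j, T j ⊆ B.erase p := fun j => (hT2 j).trans (Finset.union_subset hQ1 hQ2)
  have hex := fun j => h (T j) ((hT2' j).trans (Finset.erase_subset _ _)) p hp
    (fun hh => Finset.notMem_erase p B (hT2' j hh)) (hT1 j)
  choose φ hφ1 hφ2 using hex
  refine ⟨∏ j, lin (φ j), ?_, ?_, ?_, ?_⟩
  · have := IsHomogeneous.prod Finset.univ (fun j => lin (φ j)) (fun _ => 1)
      (fun j _ => lin_hom (φ j))
    simpa using this
  · rw [map_prod, Finset.prod_ne_zero_iff]
    intro j _
    rw [eval_lin]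
    exact hφ2 j
  · intro q hq
    obtain ⟨j, hj⟩ := hT3 q hq
    rw [map_prod]
    exact Finset.prod_eq_zero (Finset.mem_univ j) (by rw [eval_lin]; exact hφ1 j q hj)
  · intro q hq
    obtain ⟨i, j, hij, hi, hj⟩ := hT4 q hq
    exact dv_prod _ _ i j hij (by rw [eval_lin]; exact hφ1 i q hi)
      (by rw [eval_lin]; exact hφ1 j q hj)

/-- gradients achievable at `p` with zero gradient at other points -/
def grads {k : Type*} [Field k] {n : ℕ} (d : ℕ) (B : Finset (ProjSpace k n))
    (p : ProjSpace k n) : Submodule k (Fin (n+1) → k) where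
  carrier := {w | ∃ f : MvPolynomial (Fin (n+1)) k, f.IsHomogeneous d ∧
    (∀ i, eval p.rep (pderiv i f) = w i) ∧ ∀ q ∈ B, q ≠ p → ∀ i, eval q.rep (pderiv i f) = 0}
  zero_mem' := ⟨0, isHomogeneous_zero _ _ _, by simp, by simp⟩
  add_mem' := by
    rintro a b ⟨f, h1, h2, h3⟩ ⟨g, g1, g2, g3⟩
    refine ⟨f + g, h1.add g1, fun i => by simp [h2, g2], fun q hq hqp i => ?_⟩
    simp [h3 q hq hqp, g3 q hq hqp]
  smul_mem' := by
    rintro c a ⟨f, h1, h2, h3⟩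
    refine ⟨c • f, (homogeneousSubmodule _ k d).smul_mem c h1, fun i => ?_, fun q hq hqp i => ?_⟩
    · simp [smul_eval, h2]
    · simp [smul_eval, h3 q hq hqp]

theorem surj_of_grads {k : Type*} [Field k] {n d : ℕ} (B : Finset (ProjSpace k n))
    (h : ∀ p ∈ B, grads d B p = ⊤) : Function.Surjective (gradMap d B) := by
  classical
  rw [← LinearMap.range_eq_top, eq_top_iff]
  intro w _
  rw [← Finset.univ_sum_single w]
  refine Submodule.sum_mem _ fun p _ => ?_
  have : w p ∈ grads d B p.1 := by rw [h p.1 p.2]; trivial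
  obtain ⟨f, h1, h2, h3⟩ := this
  refine ⟨⟨f, h1⟩, ?_⟩
  ext q i
  rw [gradMap_apply]
  by_cases hq : q = p
  · subst hq
    simp [h2]
  · rw [h3 q.1 q.2 (fun hh => hq (Subtype.ext hh)) i]
    simp [hq]

theorem dot_eq {k : Type*} [Field k] {m : ℕ} (φ : (Fin m → k) →ₗ[k] k) (v : Fin m → k) :
    φ v = ∑ i, v i * φ (Pi.single i 1) := by
  conv_lhs => rw [pi_eq_sum_univ' v]
  simp

theorem Sep.grads_eq_top {k : Type*} [Field k] [CharZero k] {n d : ℕ}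
    {B : Finset (ProjSpace k n)} (h : Sep B) (hd : 3 ≤ d) (hn : n + 1 ≤ B.card)
    (hc : 2 * B.card ≤ n * d + 1) (p : ProjSpace k n) (hp : p ∈ B) : grads d B p = ⊤ := by
  classical
  have hcard : (B.erase p).card + 1 = B.card := Finset.card_erase_add_one hp
  obtain ⟨R, hR, hRc⟩ := Finset.exists_subset_card_eq (show n ≤ (B.erase p).card by omega)
  have hpR : p ∉ R := fun hh => Finset.notMem_erase p B (hR hh)
  have hRB : R ⊆ B := hR.trans (Finset.erase_subset _ _)
  -- the linear forms
  have hL : ∀ r : R, ∃ φ : (Fin (n+1) → k) →ₗ[k] k, φ p.rep = 0 ∧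
      (∀ q ∈ R, q ≠ r.1 → φ q.rep = 0) ∧ φ r.1.rep ≠ 0 ∧
      (fun i => φ (Pi.single i 1)) ∈ grads d B p := by
    intro r
    have hRr : (R.erase r.1).card + 1 = n := by rw [Finset.card_erase_add_one r.2, hRc]
    obtain ⟨φ, h1, h2⟩ := h (insert p (R.erase r.1))
      (Finset.insert_subset hp ((Finset.erase_subset _ _).trans hRB)) r.1 (hRB r.2)
      (by
        rw [Finset.mem_insert]
        rintro (hh | hh)
        · exact hpR (hh ▸ r.2)
        · exact Finset.notMem_erase _ _ hh)
      ((Finset.card_insert_le _ _).trans (by omega))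
    have hp0 : φ p.rep = 0 := h1 p (Finset.mem_insert_self _ _)
    have hq0 : ∀ q ∈ R.erase r.1, φ q.rep = 0 := fun q hq => h1 q (Finset.mem_insert_of_mem hq)
    refine ⟨φ, hp0, fun q hq hqr => hq0 q (Finset.mem_erase.mpr ⟨hqr, hq⟩), h2, ?_⟩
    have hsub : R.erase r.1 ⊆ B.erase p := (Finset.erase_subset _ _).trans hR
    have hsd : (B.erase p \ R.erase r.1).card + (R.erase r.1).card = (B.erase p).card :=
      Finset.card_sdiff_add_card_eq_card hsub
    obtain ⟨f, f1, f2, f3, f4⟩ := exists_prod h p hp (R.erase r.1) (B.erase p \ R.erase r.1)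
      hsub Finset.sdiff_subset (d - 1) (by omega) (by
        obtain ⟨e, rfl⟩ : ∃ e, d = e + 1 := ⟨d - 1, by omega⟩
        rw [Nat.add_sub_cancel]
        rw [Nat.mul_succ] at hc
        omega)
    have key : (eval p.rep f) • (fun i => φ (Pi.single i 1)) ∈ grads d B p := by
      refine ⟨lin φ * f, ?_, ?_, ?_⟩
      · have := (lin_hom φ).mul f1
        rwa [show 1 + (d - 1) = d by omega] at this
      · intro i
        simp [pderiv_mul, eval_lin, pderiv_lin, hp0, mul_comm]
      · intro q hq hqp
        refine ((mem_doubleVanishing _ _).mp ?_).2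
        by_cases hqR : q ∈ R.erase r.1
        · exact dv_mul _ _ _ (by rw [eval_lin]; exact hq0 q hqR) (f3 q hqR)
        · exact dv_mul_right _ _ _ (f4 q (Finset.mem_sdiff.mpr
            ⟨Finset.mem_erase.mpr ⟨hqp, hq⟩, hqR⟩))
    have := (grads d B p).smul_mem (eval p.rep f)⁻¹ key
    rwa [smul_smul, inv_mul_cancel₀ f2, one_smul] at this
  choose φ hφ1 hφ2 hφ3 hφ4 using hL
  obtain ⟨f, f1, f2, -, f4⟩ := exists_prod h p hp ∅ (B.erase p) (Finset.empty_subset _)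
    subset_rfl d (by omega) (by simp; omega)
  set g : Fin (n+1) → k := fun i => eval p.rep (pderiv i f) with hg
  have hgm : g ∈ grads d B p := ⟨f, f1, fun i => rfl, fun q hq hqp =>
    ((mem_doubleVanishing _ _).mp (f4 q (Finset.mem_erase.mpr ⟨hqp, hq⟩))).2⟩
  have hgp : ∑ i, p.rep i * g i ≠ 0 := by
    rw [hg, euler_eval _ _ f1]
    have : (d : k) ≠ 0 := by exact_mod_cast (show d ≠ 0 by omega)
    exact mul_ne_zero this f2
  rw [eq_top_iff]
  intro w _
  -- functional attached to w
  let F : (Fin (n+1) → k) → ((Fin (n+1) → k) →ₗ[k] k) := fun w =>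
    ∑ i, (w i) • LinearMap.proj i
  have hF : ∀ w v, F w v = ∑ i, v i * w i := by
    intro w v
    simp [F, LinearMap.sum_apply, mul_comm]
  have hFs : ∀ w i, F w (Pi.single i 1) = w i := by
    intro w i
    rw [hF]; simp [Pi.single_apply]
  let c := F w p.rep / F g p.rep
  have hgp' : F g p.rep ≠ 0 := by rw [hF]; exact hgp
  let ψ := F w - c • F g
  have hψp : ψ p.rep = 0 := by
    simp [ψ, c, hgp']
  let χ := ψ - ∑ r : R, (ψ r.1.rep / φ r r.1.rep) • φ r
  have hχ : χ = 0 := by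
    have hsp : Spans k n (insert p R) :=
      (h.mono (Finset.insert_subset hp hRB)).span_eq (by
        rw [Finset.card_insert_of_notMem hpR, hRc])
    rw [Spans] at hsp
    apply LinearMap.ext_on hsp
    rintro _ ⟨q, hq, rfl⟩
    simp only [Finset.coe_insert, Set.mem_insert_iff, Finset.mem_coe] at hq
    simp only [LinearMap.zero_apply]
    rcases hq with rfl | hq
    · simp [χ, hψp, hφ1]
    · simp only [χ, LinearMap.sub_apply, LinearMap.sum_apply, LinearMap.smul_apply, smul_eq_mul]
      rw [Finset.sum_eq_single ⟨q, hq⟩]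
      · rw [div_mul_cancel₀ _ (hφ3 ⟨q, hq⟩), sub_self]
      · intro r _ hr
        rw [hφ2 r q hq (fun hh => hr (Subtype.ext hh.symm)), mul_zero]
      · simp
  have hw : w = c • g + ∑ r : R, (ψ r.1.rep / φ r r.1.rep) • (fun i => φ r (Pi.single i 1)) := by
    ext i
    have := congrArg (fun l => l (Pi.single i 1)) hχ
    simp only [χ, LinearMap.sub_apply, LinearMap.sum_apply, LinearMap.smul_apply, smul_eq_mul,
      LinearMap.zero_apply] at this
    rw [sub_eq_zero] at this
    have h2 : ψ (Pi.single i 1) = w i - c * g i := by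
      simp only [ψ, LinearMap.sub_apply, LinearMap.smul_apply, hFs, smul_eq_mul]
    rw [h2] at this
    simp only [Pi.add_apply, Pi.smul_apply, Finset.sum_apply, smul_eq_mul]
    rw [← this]; ring
  rw [hw]
  exact add_mem (Submodule.smul_mem _ _ hgm)
    (Submodule.sum_mem _ fun r _ => Submodule.smul_mem _ _ (hφ4 r))

theorem Sep.surj {k : Type*} [Field k] [CharZero k] {n d : ℕ}
    {B : Finset (ProjSpace k n)} (h : Sep B) (hd : 3 ≤ d) (hn : n + 1 ≤ B.card)
    (hc : 2 * B.card ≤ n * d + 1) : Function.Surjective (gradMap d B) :=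
  surj_of_grads B (h.grads_eq_top hd hn hc)

theorem stdRNCvec_smul (k : Type*) [Field k] (n : ℕ) (b s t : k) :
    stdRNCvec k n (b * s) (b * t) = b ^ n • stdRNCvec k n s t := by
  ext i
  have hi : (n - (i : ℕ)) + i = n := by omega
  simp only [stdRNCvec, Pi.smul_apply, smul_eq_mul, mul_pow]
  have hb : b ^ n = b ^ (n - (i : ℕ)) * b ^ (i : ℕ) := by rw [← pow_add, hi]
  rw [hb]
  ring

theorem exists_param {k : Type*} [Field k] [IsAlgClosed k] {n : ℕ} (hn : 0 < n)
    (g : (Fin (n+1) → k) ≃ₗ[k] (Fin (n+1) → k)) (p : ProjSpace k n)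
    (h : ∃ s t : k, (s ≠ 0 ∨ t ≠ 0) ∧
      Projectivization.submodule p = Submodule.span k {g (stdRNCvec k n s t)}) :
    ∃ s t : k, (s ≠ 0 ∨ t ≠ 0) ∧ p.rep = g (stdRNCvec k n s t) := by
  obtain ⟨s, t, hst, h⟩ := h
  have hm : p.rep ∈ Projectivization.submodule p := by
    rw [Projectivization.submodule_eq]; exact Submodule.mem_span_singleton_self _
  rw [h, Submodule.mem_span_singleton] at hm
  obtain ⟨a, ha⟩ := hm
  have ha0 : a ≠ 0 := by
    rintro rfl
    exact p.rep_nonzero (by rw [← ha, zero_smul])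
  obtain ⟨b, hb⟩ := IsAlgClosed.exists_pow_nat_eq a hn
  have hb0 : b ≠ 0 := by
    rintro rfl
    exact ha0 (by rw [← hb, zero_pow hn.ne'])
  refine ⟨b * s, b * t, ?_, ?_⟩
  · simpa [hb0] using hst
  · rw [stdRNCvec_smul, map_smul, hb, ha]

theorem binary_prod (k : Type*) [Field k] (n : ℕ) : ∀ (α β : Fin n → k),
    ∃ c : Fin (n+1) → k, ∀ s t : k,
      ∑ i : Fin (n+1), c i * stdRNCvec k n s t i = ∏ j, (β j * s - α j * t) := by
  induction n with
  | zero => intro α β; exact ⟨fun _ => 1, by simp [stdRNCvec]⟩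
  | succ n ih =>
    intro α β
    obtain ⟨c, hc⟩ := ih (fun j => α j.succ) (fun j => β j.succ)
    refine ⟨fun i => β 0 * (Fin.snoc (α := fun _ => k) c 0 : Fin (n+2) → k) i -
      α 0 * (Fin.cons (α := fun _ => k) 0 c : Fin (n+2) → k) i, fun s t => ?_⟩
    rw [Fin.prod_univ_succ, ← hc]
    simp only [sub_mul, Finset.sum_sub_distrib]
    congr 1
    · rw [Fin.sum_univ_castSucc, Finset.mul_sum]
      simp only [Fin.snoc_castSucc, Fin.snoc_last, mul_zero, zero_mul, add_zero]
      refine Finset.sum_congr rfl fun i _ => ?_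
      have : n + 1 - (i : ℕ) = (n - i) + 1 := by omega
      simp only [stdRNCvec, Fin.val_castSucc, this, pow_succ]
      ring
    · rw [Fin.sum_univ_succ, Finset.mul_sum]
      simp only [Fin.cons_zero, Fin.cons_succ, mul_zero, zero_mul, zero_add]
      refine Finset.sum_congr rfl fun i _ => ?_
      simp only [stdRNCvec, Fin.val_succ, Nat.add_sub_add_right, pow_succ]
      ring

theorem eq_of_cross {k : Type*} [Field k] {n : ℕ}
    (g : (Fin (n+1) → k) ≃ₗ[k] (Fin (n+1) → k)) (p q : ProjSpace k n) (s t s' t' : k)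
    (hp : p.rep = g (stdRNCvec k n s t)) (hq : q.rep = g (stdRNCvec k n s' t'))
    (hst : s' ≠ 0 ∨ t' ≠ 0) (h : t' * s - s' * t = 0) : p = q := by
  have : ∃ b, s = b * s' ∧ t = b * t' := by
    rcases hst with h0 | h0
    · refine ⟨s / s', by field_simp, ?_⟩
      field_simp
      linear_combination -h
    · refine ⟨t / t', ?_, by field_simp⟩
      field_simp
      linear_combination h
  obtain ⟨b, rfl, rfl⟩ := this
  rw [stdRNCvec_smul, map_smul, ← hq] at hp
  rw [← p.mk_rep, ← q.mk_rep, Projectivization.mk_eq_mk_iff']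
  exact ⟨b ^ n, hp.symm⟩

theorem sep_of_param {k : Type*} [Field k] {n : ℕ}
    (g : (Fin (n+1) → k) ≃ₗ[k] (Fin (n+1) → k)) (S : Finset (ProjSpace k n))
    (h : ∀ p ∈ S, ∃ s t : k, (s ≠ 0 ∨ t ≠ 0) ∧ p.rep = g (stdRNCvec k n s t)) : Sep S := by
  intro T hT p hp hpT hc
  obtain ⟨s, t, hst, hpr⟩ := h p hp
  choose σ τ hστ hr using fun q : T => h q.1 (hT q.2)
  obtain ⟨a, b, hab⟩ : ∃ a b : k, b * s - a * t ≠ 0 := by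
    rcases hst with h0 | h0
    · exact ⟨0, 1, by simpa using h0⟩
    · exact ⟨1, 0, by simpa using h0⟩
  let e := T.equivFin
  obtain ⟨c, hcc⟩ := binary_prod k n
    (fun j => if hj : j.1 < T.card then σ (e.symm ⟨j.1, hj⟩) else a)
    (fun j => if hj : j.1 < T.card then τ (e.symm ⟨j.1, hj⟩) else b)
  have hφ : ∀ s t, (∑ i, c i • (LinearMap.proj i : (Fin (n+1) → k) →ₗ[k] k)).comp
      g.symm.toLinearMap (g (stdRNCvec k n s t)) = ∑ i, c i * stdRNCvec k n s t i := by
    intro s t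
    simp [LinearMap.sum_apply]
  refine ⟨(∑ i, c i • (LinearMap.proj i : (Fin (n+1) → k) →ₗ[k] k)).comp g.symm.toLinearMap,
    ?_, ?_⟩
  · intro q hq
    rw [hr ⟨q, hq⟩, hφ, hcc]
    have hlt := (e ⟨q, hq⟩).2
    refine Finset.prod_eq_zero (Finset.mem_univ ⟨(e ⟨q, hq⟩).1, by omega⟩) ?_
    simp
    ring
  · rw [hpr, hφ, hcc, Finset.prod_ne_zero_iff]
    intro j _
    by_cases hj : j.1 < T.card
    · simp only [hj, dif_pos]
      intro h0
      have := eq_of_cross g p (e.symm ⟨j.1, hj⟩).1 s t _ _ hpr (hr _) (hστ _) h0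
      exact hpT (this ▸ (e.symm ⟨j.1, hj⟩).2)
    · simpa only [hj, dif_neg, not_false_eq_true] using hab

theorem pderiv_bind {k : Type*} [Field k] {m r : ℕ} (N : Fin m → MvPolynomial (Fin r) k)
    (f : MvPolynomial (Fin m) k) (a : Fin r) :
    pderiv a (bind₁ N f) = ∑ j, bind₁ N (pderiv j f) * pderiv a (N j) := by
  induction f using MvPolynomial.induction_on with
  | C c => simp
  | add p q hp hq => simp [hp, hq, add_mul, Finset.sum_add_distrib]
  | mul_X p i hp =>
    simp only [map_mul, bind₁_X_right, pderiv_mul, hp, map_add, add_mul, Finset.sum_add_distrib,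
      pderiv_X, Finset.sum_mul]
    congr 1
    · exact Finset.sum_congr rfl fun j _ => by ring
    · rw [Finset.sum_eq_single i]
      · simp
      · intro j _ hj; simp [Pi.single_apply, hj.symm]
      · simp

/-- homogeneous coordinate monomials of the curve -/
noncomputable def mono (k : Type*) [Field k] (n : ℕ) (i : Fin (n+1)) : MvPolynomial (Fin 2) k :=
  X 0 ^ (n - (i : ℕ)) * X 1 ^ (i : ℕ)

theorem exists_solve {k : Type*} [Field k] [CharZero k] {n : ℕ} (hn : 0 < n) (s t : k)
    (hst : s ≠ 0 ∨ t ≠ 0) (u : Fin 2 → k) :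
    ∃ z : (Fin (n+1) → k) →ₗ[k] k, ∀ a, z (fun i => eval ![s, t] (pderiv a (mono k n i))) = u a := by
  have hn0 : (n : k) ≠ 0 := by exact_mod_cast hn.ne'
  suffices H : ∃ (i j : Fin (n+1)) (x y : k),
      ∀ a, x * eval ![s, t] (pderiv a (mono k n i)) + y * eval ![s, t] (pderiv a (mono k n j)) = u a by
    obtain ⟨i, j, x, y, h⟩ := H
    exact ⟨x • LinearMap.proj i + y • LinearMap.proj j, fun a => by simpa using h a⟩
  rcases hst with h | h
  · refine ⟨⟨0, by omega⟩, ⟨1, by omega⟩,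
      (u 0 - u 1 / s ^ (n-1) * ((n - 1 : ℕ) * s ^ (n - 1 - 1) * t)) / (n * s ^ (n-1)),
      u 1 / s ^ (n-1), fun a => ?_⟩
    fin_cases a
    · simp [mono, pderiv_X, Pi.single_apply, Derivation.leibniz_pow]
      field_simp
      ring
    · simp [mono, pderiv_X, Pi.single_apply, Derivation.leibniz_pow]
      field_simp
  · refine ⟨⟨n, by omega⟩, ⟨n - 1, by omega⟩,
      (u 1 - u 0 / t ^ (n-1) * ((n - 1 : ℕ) * t ^ (n - 1 - 1) * s)) / (n * t ^ (n-1)),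
      u 0 / t ^ (n-1), fun a => ?_⟩
    have h1 : n - (n - 1) = 1 := by omega
    fin_cases a
    · simp [mono, pderiv_X, Pi.single_apply, Derivation.leibniz_pow, h1]
      field_simp
    · simp [mono, pderiv_X, Pi.single_apply, Derivation.leibniz_pow, h1]
      field_simp
      ring

/-- The `j`-th coordinate of the parametrised curve. -/
noncomputable def crd {k : Type*} [Field k] {n : ℕ} (g : (Fin (n+1) → k) ≃ₗ[k] (Fin (n+1) → k))
    (j : Fin (n+1)) : MvPolynomial (Fin 2) k := ∑ i, C (g (Pi.single i 1) j) * mono k n i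

theorem g_eq {k : Type*} [Field k] {n : ℕ} (g : (Fin (n+1) → k) ≃ₗ[k] (Fin (n+1) → k))
    (v : Fin (n+1) → k) (j : Fin (n+1)) : g v j = ∑ i, g (Pi.single i 1) j * v i := by
  conv_lhs => rw [pi_eq_sum_univ' v]
  simp [mul_comm]

theorem not_surj {k : Type*} [Field k] [CharZero k] {n d : ℕ} (hn : 0 < n)
    (g : (Fin (n+1) → k) ≃ₗ[k] (Fin (n+1) → k)) (S : Finset (ProjSpace k n))
    (h : ∀ p ∈ S, ∃ s t : k, (s ≠ 0 ∨ t ≠ 0) ∧ p.rep = g (stdRNCvec k n s t))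
    (hc : n * d + 1 < 2 * S.card) : ¬ Function.Surjective (gradMap d S) := by
  intro hsurj
  choose σ τ hστ hr using fun q : S => h q.1 q.2
  let Ψ : homogeneousSubmodule (Fin 2) k (n * d) →ₗ[k] (S → Fin 2 → k) :=
    LinearMap.pi fun p => LinearMap.pi fun a =>
      ((evalLM k ![σ p, τ p]).comp (MvPolynomial.pderiv a).toLinearMap).comp (Submodule.subtype _)
  have hΨ : ∀ F p a, Ψ F p a = eval ![σ p, τ p] (pderiv a F.1) := by
    intro F p a
    simp [Ψ, evalLM, aeval_eq_eval]
  have hmono : ∀ i, (mono k n i).IsHomogeneous n := by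
    intro i
    have := ((isHomogeneous_X k (0 : Fin 2)).pow (n - (i : ℕ))).mul
      ((isHomogeneous_X k (1 : Fin 2)).pow (i : ℕ))
    rwa [show 1 * (n - (i : ℕ)) + 1 * i = n by omega] at this
  have hcrd : ∀ j, (crd g j).IsHomogeneous n := by
    intro j
    refine IsHomogeneous.sum _ _ _ fun i _ => ?_
    simpa using (isHomogeneous_C (Fin 2) (g (Pi.single i 1) j)).mul (hmono i)
  have hev : ∀ p : S, (fun j => eval ![σ p, τ p] (crd g j)) = p.1.rep := by
    intro p
    ext j
    rw [hr p, g_eq]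
    simp [crd, mono, stdRNCvec]
  have hΨs : Function.Surjective Ψ := by
    intro u
    choose z hz using fun p : S => exists_solve hn (σ p) (τ p) (hστ p) (u p)
    obtain ⟨f, hf⟩ := hsurj (fun p j => z p (g.symm (Pi.single j 1)))
    refine ⟨⟨bind₁ (crd g) f.1, ?_⟩, ?_⟩
    · exact IsHomogeneous.aeval f.2 _ hcrd
    · ext p a
      rw [hΨ, pderiv_bind, map_sum, ← hz p a]
      have h1 : ∀ j, eval ![σ p, τ p] (bind₁ (crd g) (pderiv j f.1)) =
          z p (g.symm (Pi.single j 1)) := by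
        intro j
        have : eval ![σ p, τ p] (bind₁ (crd g) (pderiv j f.1)) = eval p.1.rep (pderiv j f.1) := by
          rw [← hev p, ← aeval_eq_eval, ← aeval_eq_eval]
          simp only [RingHom.coe_coe, aeval_bind₁]
        rw [this, ← gradMap_apply d S f p j, hf]
      have h2 : ∀ j, eval ![σ p, τ p] (pderiv a (crd g j)) =
          g (fun i => eval ![σ p, τ p] (pderiv a (mono k n i))) j := by
        intro j
        rw [g_eq]
        simp [crd]
      simp only [map_mul, h1, h2]
      set D := (fun i => eval ![σ p, τ p] (pderiv a (mono k n i))) with hD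
      have := dot_eq ((z p).comp g.symm.toLinearMap) (g D)
      simp only [LinearMap.comp_apply, LinearEquiv.coe_coe, LinearEquiv.symm_apply_apply] at this
      rw [this]
      exact Finset.sum_congr rfl fun j _ => mul_comm _ _
  have := LinearMap.finrank_le_finrank_of_surjective hΨs
  rw [finrank_hom k 1 (n * d)] at this
  simp only [Module.finrank_pi_fintype, Module.finrank_self, Fintype.card_fin,
    Finset.sum_const, Finset.card_univ, Fintype.card_coe, smul_eq_mul, Nat.choose_one_right] at this
  omega

/-- coordinate after undoing `g` -/
noncomputable def yy {k : Type*} [Field k] {n : ℕ} (g : (Fin (n+1) → k) ≃ₗ[k] (Fin (n+1) → k))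
    (j : Fin (n+1)) : MvPolynomial (Fin (n+1)) k :=
  lin ((LinearMap.proj j).comp g.symm.toLinearMap)

theorem eval_yy {k : Type*} [Field k] {n : ℕ} (g : (Fin (n+1) → k) ≃ₗ[k] (Fin (n+1) → k))
    (j : Fin (n+1)) (v : Fin (n+1) → k) : eval (g v) (yy g j) = v j := by
  rw [yy, eval_lin]; simp

theorem h0_pos_quartic {k : Type*} [Field k] {n d : ℕ} (hn : 2 ≤ n) (hd : 4 ≤ d)
    (g : (Fin (n+1) → k) ≃ₗ[k] (Fin (n+1) → k)) (S : Finset (ProjSpace k n))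
    (h : ∀ p ∈ S, ∃ s t : k, (s ≠ 0 ∨ t ≠ 0) ∧ p.rep = g (stdRNCvec k n s t)) :
    0 < h0 k n d S := by
  let y0 := yy g ⟨0, by omega⟩
  let y1 := yy g ⟨1, by omega⟩
  let y2 := yy g ⟨2, by omega⟩
  have hy0 : y0.IsHomogeneous 1 := lin_hom _
  have hy1 : y1.IsHomogeneous 1 := lin_hom _
  have hy2 : y2.IsHomogeneous 1 := lin_hom _
  have hQ : (y0 * y2 - y1 * y1).IsHomogeneous 2 := (hy0.mul hy2).sub (hy1.mul hy1)
  refine h0_pos S (y0 ^ (d - 4) * ((y0 * y2 - y1 * y1) * (y0 * y2 - y1 * y1))) ?_ ?_ ?_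
  · have := (hy0.pow (d - 4)).mul (hQ.mul hQ)
    rwa [show 1 * (d - 4) + (2 + 2) = d by omega] at this
  · intro h0
    have := congrArg (eval (g (Pi.single ⟨0, by omega⟩ 1 + Pi.single ⟨2, by omega⟩ 1))) h0
    simp only [y0, y1, y2, map_mul, map_sub, map_pow, map_zero, eval_yy] at this
    simp [Pi.single_apply] at this
  · intro p hp
    obtain ⟨s, t, -, hpr⟩ := h p hp
    apply dv_mul_right
    have : eval p.rep (y0 * y2 - y1 * y1) = 0 := by
      obtain ⟨m, rfl⟩ : ∃ m, n = m + 2 := ⟨n - 2, by omega⟩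
      rw [hpr]
      simp [y0, y1, y2, eval_yy, stdRNCvec]
      ring
    exact dv_mul _ _ _ this this

theorem h0_pos_cubic {k : Type*} [Field k] {n : ℕ} (hn : 4 ≤ n)
    (g : (Fin (n+1) → k) ≃ₗ[k] (Fin (n+1) → k)) (S : Finset (ProjSpace k n))
    (h : ∀ p ∈ S, ∃ s t : k, (s ≠ 0 ∨ t ≠ 0) ∧ p.rep = g (stdRNCvec k n s t)) :
    0 < h0 k n 3 S := by
  obtain ⟨m, rfl⟩ : ∃ m, n = m + 4 := ⟨n - 4, by omega⟩
  let y0 := yy g ⟨0, by omega⟩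
  let y1 := yy g ⟨1, by omega⟩
  let y2 := yy g ⟨2, by omega⟩
  let y3 := yy g ⟨3, by omega⟩
  let y4 := yy g ⟨4, by omega⟩
  have hy0 : y0.IsHomogeneous 1 := lin_hom _
  have hy1 : y1.IsHomogeneous 1 := lin_hom _
  have hy2 : y2.IsHomogeneous 1 := lin_hom _
  have hy3 : y3.IsHomogeneous 1 := lin_hom _
  have hy4 : y4.IsHomogeneous 1 := lin_hom _
  refine h0_pos S (y0 * y2 * y4 + y1 * y2 * y3 + y1 * y2 * y3 - y2 * y2 * y2 - y0 * y3 * y3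
    - y1 * y1 * y4) ?_ ?_ ?_
  · have h1 := (hy0.mul hy2).mul hy4
    have h2 := (hy1.mul hy2).mul hy3
    have h3 := (hy2.mul hy2).mul hy2
    have h4 := (hy0.mul hy3).mul hy3
    have h5 := (hy1.mul hy1).mul hy4
    exact ((((h1.add h2).add h2).sub h3).sub h4).sub h5
  · intro h0
    have := congrArg (eval (g (Pi.single ⟨2, by omega⟩ 1))) h0
    simp [y0, y1, y2, y3, y4, eval_yy, Pi.single_apply] at this
  · intro p hp
    obtain ⟨s, t, -, hpr⟩ := h p hp
    have e0 : eval p.rep y0 = s ^ m * s ^ 4 := by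
      rw [hpr]; simp [y0, eval_yy, stdRNCvec, pow_add]
    have e1 : eval p.rep y1 = s ^ m * s ^ 3 * t := by
      rw [hpr]; simp [y1, eval_yy, stdRNCvec, pow_add]
    have e2 : eval p.rep y2 = s ^ m * s ^ 2 * t ^ 2 := by
      rw [hpr]; simp [y2, eval_yy, stdRNCvec, pow_add]
    have e3 : eval p.rep y3 = s ^ m * s * t ^ 3 := by
      rw [hpr]; simp [y3, eval_yy, stdRNCvec, pow_add]
    have e4 : eval p.rep y4 = s ^ m * t ^ 4 := by
      rw [hpr]; simp [y4, eval_yy, stdRNCvec]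
    clear_value y0 y1 y2 y3 y4
    rw [mem_doubleVanishing]
    constructor
    · simp only [map_sub, map_add, map_mul, e0, e1, e2, e3, e4]
      ring
    · intro i
      simp only [map_sub, map_add, map_mul, pderiv_mul, e0, e1, e2, e3, e4]
      ring

end RNCT

/-- Theorem: points on a rational normal curve `C ⊂ P^n` are Terracini / minimally
Terracini in the stated ranges:
(i) `n ≥ 3`, `d ≥ 4`, `x ≥ 1 + ⌈nd/2⌉` gives `S ∈ T(n,d;x)`;
(ii) `n ≥ 4`, `d = 3`, `x = 1 + ⌈3n/2⌉` gives `S ∈ T(n,3;x)`;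
(iii) `n ≥ 2`, `d ≥ 4`, `x = 1 + ⌈nd/2⌉` gives `S ∈ T(n,d;x)'`. -/
theorem rnc_points_terracini
    (k : Type*) [Field k] [IsAlgClosed k] [CharZero k]
    (n d x : ℕ)
    (C : Set (ProjSpace k n)) (hC : IsRNC k n C)
    (S : Finset (ProjSpace k n)) (hS : ↑S ⊆ C) (hcard : S.card = x) :
    (3 ≤ n → 4 ≤ d → 1 + (n * d + 1) / 2 ≤ x → S ∈ Terracini k n d x) ∧
    (4 ≤ n → d = 3 → x = 1 + (3 * n + 1) / 2 → S ∈ Terracini k n 3 x) ∧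
    (2 ≤ n → 4 ≤ d → x = 1 + (n * d + 1) / 2 → S ∈ minTerracini k n d x) := by
  obtain ⟨g, rfl⟩ := hC
  have hpar : 0 < n → ∀ p ∈ S, ∃ s t : k, (s ≠ 0 ∨ t ≠ 0) ∧ p.rep = g (stdRNCvec k n s t) :=
    fun hn p hp => RNCT.exists_param hn g p (hS hp)
  have main : 2 ≤ n → 4 ≤ d → 1 + (n * d + 1) / 2 ≤ x → S ∈ Terracini k n d x := by
    intro hn hd hx
    have hp := hpar (by omega)
    have hnd : n * 4 ≤ n * d := Nat.mul_le_mul_left n hd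
    exact ⟨hcard, (RNCT.sep_of_param g S hp).spans (by omega),
      RNCT.h0_pos_quartic hn hd g S hp,
      RNCT.h1_pos (by omega) S (RNCT.not_surj (by omega) g S hp (by omega))⟩
  refine ⟨fun hn => main (by omega), ?_, ?_⟩
  · intro hn _ hx
    have hp := hpar (by omega)
    exact ⟨hcard, (RNCT.sep_of_param g S hp).spans (by omega),
      RNCT.h0_pos_cubic hn g S hp,
      RNCT.h1_pos (by omega) S (RNCT.not_surj (by omega) g S hp (by omega))⟩
  · intro hn hd hx
    refine ⟨main hn hd hx.ge, fun A hA => ?_⟩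
    classical
    obtain ⟨q, hq, hqA⟩ := Finset.exists_of_ssubset hA
    have hnd : n * 4 ≤ n * d := Nat.mul_le_mul_left n hd
    have hAq : A ⊆ S.erase q := fun a ha =>
      Finset.mem_erase.mpr ⟨fun h => hqA (h ▸ ha), hA.1 ha⟩
    have hc : (S.erase q).card + 1 = S.card := Finset.card_erase_add_one hq
    have hsep := (RNCT.sep_of_param g S (hpar (by omega))).mono (Finset.erase_subset q S)
    exact RNCT.h1_eq_zero (by omega) A
      (RNCT.surj_mono hAq (hsep.surj (by omega) (by omega) (by omega)))
end
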